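/- arXiv:2005.13168 — 3 statements merged into one kernel-verified Lean document; each statement's English description precedes it below -/
import Mathlib

section
/- Let γ : [0,1] → ℝ² be a closed curve with image K, and let A = {p ∈ ℝ² : dist(p, K) < 1} be the open 1-neighbourhood of K. Suppose K is a deformation retract of A in the following sense: there is a continuous map r : A → K with r(x) = x for all x ∈ K, such that the composition of r with the inclusion K ↪ A is homotopic to the identity map of A. Then every bounded connected component P of ℝ² \ K contains a point c with dist(c, K) ≥ 1; consequently the open ball of radius 1 centred at c is contained in P. In particular, each bounded complementary component of such a curve contains an open disk of radius 1. -/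
noncomputable section

/-! A bounded component `P` of the complement of a closed set `K` has its frontier in `K`. If a
set `A ⊇ K` retracting onto `K` contained `P`, the retraction on `P`, continued by the
identity outside `P`, would be a continuous self-map of the plane that moves only points of a
bounded set and omits every point of `P`. Such a map is onto: otherwise, translating an omitted
value to `0`, its continuous logarithm would restrict to a logarithm on a large circle. Taking
the open `ρ`-neighbourhood of `K` for `A`, any point of `P` outside it is the centre of the disk. -/

section Retraction

variable {X : Type*} [TopologicalSpace X]

/-- `r` is a retraction of the subspace `A` onto its subset `K`. The map is total, so that it can be
glued with other maps; its values outside `A` are irrelevant. -/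
structure IsRetractionOn (r : X → X) (A K : Set X) : Prop where
  subset : K ⊆ A
  continuousOn : ContinuousOn r A
  mapsTo : Set.MapsTo r A K
  eqOn_id : Set.EqOn r id K

lemma exists_isRetractionOn_of_continuousMap {A K : Set X} (hKA : K ⊆ A) (r : C(A, A))
    (hrK : ∀ x : A, (r x : X) ∈ K) (hrid : ∀ x : A, (x : X) ∈ K → (r x : X) = x) :
    ∃ r' : X → X, IsRetractionOn r' A K := by
  let r' : X → X := Function.extend ((↑) : A → X) (fun x ↦ (r x : X)) id
  have hr' (x : A) : r' x = r x := Subtype.val_injective.extend_apply _ _ x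
  refine ⟨r', hKA, ?_, fun x hx ↦ ?_, fun x hx ↦ ?_⟩
  · rw [continuousOn_iff_continuous_domRestrict]
    exact (continuous_subtype_val.comp r.continuous).congr fun x ↦ (hr' x).symm
  · exact hr' ⟨x, hx⟩ ▸ hrK _
  · exact (hr' ⟨x, hKA hx⟩).trans (hrid _ hx)

end Retraction

section Components

open Metric

lemma frontier_connectedComponentIn_subset_compl {X : Type*} [TopologicalSpace X]
    [LocallyConnectedSpace X] {U : Set X} (hU : IsOpen U) (p : X) :
    frontier (connectedComponentIn U p) ⊆ Uᶜ := by
  intro x hx hxU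
  rw [hU.connectedComponentIn.frontier_eq] at hx
  obtain ⟨y, hyx, hyp⟩ := mem_closure_iff.1 hx.1 (connectedComponentIn U x)
    hU.connectedComponentIn (mem_connectedComponentIn hxU)
  have hcomp : connectedComponentIn U p = connectedComponentIn U x :=
    (connectedComponentIn_eq hyp).trans (connectedComponentIn_eq hyx).symm
  exact hx.2 (hcomp ▸ mem_connectedComponentIn hxU)

lemma ball_subset_connectedComponentIn {E : Type*} [SeminormedAddCommGroup E] [NormedSpace ℝ E]
    {U : Set E} {c : E} {ρ : ℝ} (h : ball c ρ ⊆ U) : ball c ρ ⊆ connectedComponentIn U c :=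
  fun _ hx ↦ (convex_ball c ρ).isPreconnected.subset_connectedComponentIn
    (mem_ball_self (pos_of_mem_ball hx)) h hx

end Components

section NoRetraction

open Complex Metric Set
open scoped Pointwise

lemma not_exists_continuousOn_log_sphere {R : ℝ} (hR : 0 < R) :
    ¬ ∃ L : ℂ → ℂ, ContinuousOn L (sphere 0 R) ∧ EqOn (exp ∘ L) id (sphere 0 R) := by
  rintro ⟨L, hL, hexp⟩
  let g (θ : ℝ) : ℂ := L (circleMap 0 R θ) - θ * I
  have hmem (θ : ℝ) : circleMap 0 R θ ∈ sphere 0 R := circleMap_mem_sphere 0 hR.le θ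
  have hg : Continuous g :=
    (hL.comp_continuous (continuous_circleMap 0 R) hmem).sub (by fun_prop)
  have hexp_g (θ : ℝ) : exp (g θ) = R := by
    have hexp_L : exp (L (circleMap 0 R θ)) = R * exp (θ * I) := by
      simpa [circleMap_zero] using hexp (hmem θ)
    rw [exp_sub, hexp_L, mul_div_cancel_right₀ _ (exp_ne_zero _)]
  have hconst : g 0 = g (2 * Real.pi) :=
    isCoveringMap_exp.const_of_comp hg (fun θ θ' ↦ by simp [hexp_g]) _ _
  have hperiod : circleMap 0 R (2 * Real.pi) = circleMap 0 R 0 := by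
    simpa using periodic_circleMap 0 R 0
  have hshift : L (circleMap 0 R 0) = L (circleMap 0 R 0) - 2 * Real.pi * I := by
    simpa [g, hperiod] using hconst
  exact two_pi_I_ne_zero (sub_eq_self.1 hshift.symm)

lemma exists_eq_zero_of_eqOn_id_sphere {f : ℂ → ℂ} (hf : Continuous f) {R : ℝ} (hR : 0 < R)
    (hid : EqOn f id (sphere 0 R)) : ∃ z, f z = 0 := by
  by_contra! hne
  have : ContractibleSpace (univ : Set ℂ) := convex_univ.contractibleSpace univ_nonempty
  have hsimply : IsSimplyConnected (univ : Set ℂ) := SimplyConnectedSpace.ofContractible _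
  obtain ⟨L, hL, hexp⟩ := exists_continuousOn_eqOn_exp_comp hsimply
    isOpen_univ hf.continuousOn (by simpa using hne)
  exact not_exists_continuousOn_log_sphere hR
    ⟨L, hL.mono (subset_univ _), (hexp.mono (subset_univ _)).trans hid⟩

variable {E : Type*} [NormedAddCommGroup E] [NormedSpace ℝ E]

lemma surjective_of_eqOn_id_compl (hE : Module.finrank ℝ E = 2) {f : E → E} (hf : Continuous f)
    {s : Set E} (hs : Bornology.IsBounded s) (hid : EqOn f id sᶜ) : Function.Surjective f := by
  have : FiniteDimensional ℝ E := Module.finite_of_finrank_eq_succ hE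
  let e : E ≃L[ℝ] ℂ := .ofFinrankEq (hE.trans finrank_real_complex.symm)
  intro p
  obtain ⟨R, hR, hsR⟩ : ∃ R > 0, e '' (s - {p}) ⊆ ball 0 R :=
    (e.lipschitz.isBounded_image (hs.sub Bornology.isBounded_singleton)).subset_ball_lt 0 0
  obtain ⟨z, hz⟩ := exists_eq_zero_of_eqOn_id_sphere
    (f := fun z ↦ e (f (e.symm z + p) - p)) (by fun_prop) hR fun z hz ↦ by
      have hzs : e.symm z + p ∉ s := fun h ↦ by
        have hzR : z ∈ ball 0 R := hsR ⟨e.symm z, ⟨_, h, p, rfl, by simp⟩, by simp⟩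
        exact (mem_ball.1 hzR).ne hz
      simp [hid hzs]
  exact ⟨e.symm z + p, sub_eq_zero.1 (e.map_eq_zero_iff.1 hz)⟩

lemma subset_image_of_eqOn_id_frontier (hE : Module.finrank ℝ E = 2) {f : E → E} {s : Set E}
    (hs : Bornology.IsBounded s) (hf : ContinuousOn f (closure s))
    (hid : EqOn f id (frontier s)) : s ⊆ f '' s := by
  classical
  intro p hp
  have hcont : Continuous (s.piecewise f id) := continuous_piecewise hid hf continuousOn_id
  obtain ⟨x, hx⟩ :=
    surjective_of_eqOn_id_compl hE hcont hs (s.piecewise_eqOn_compl f id) p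
  by_cases hxs : x ∈ s
  · exact ⟨x, hxs, by simpa [hxs] using hx⟩
  · exact absurd (by simpa [hxs] using hx : x = p) (ne_of_mem_of_not_mem hp hxs).symm

lemma IsRetractionOn.not_connectedComponentIn_compl_subset (hE : Module.finrank ℝ E = 2)
    {r : E → E} {A K : Set E} (hr : IsRetractionOn r A K) (hK : IsClosed K) {p : E} (hp : p ∉ K)
    (hbd : Bornology.IsBounded (connectedComponentIn Kᶜ p)) :
    ¬ connectedComponentIn Kᶜ p ⊆ A := by
  intro hPA
  have hfr : frontier (connectedComponentIn Kᶜ p) ⊆ K := by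
    simpa using frontier_connectedComponentIn_subset_compl hK.isOpen_compl p
  have hclA : closure (connectedComponentIn Kᶜ p) ⊆ A := by
    rw [closure_eq_self_union_frontier]
    exact union_subset hPA (hfr.trans hr.subset)
  obtain ⟨x, hxP, rfl⟩ := subset_image_of_eqOn_id_frontier hE hbd (hr.continuousOn.mono hclA)
    (hr.eqOn_id.mono hfr) (mem_connectedComponentIn hp)
  exact hp (hr.mapsTo (hPA hxP))

theorem unit_disk_in_bounded_component_general (hE : Module.finrank ℝ E = 2) {K : Set E}
    (hK : IsClosed K) {ρ : ℝ} {r : E → E} (hr : IsRetractionOn r {x | infDist x K < ρ} K)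
    {p : E} (hp : p ∉ K) (hbd : Bornology.IsBounded (connectedComponentIn Kᶜ p)) :
    ∃ c ∈ connectedComponentIn Kᶜ p, ρ ≤ infDist c K ∧
      ball c ρ ⊆ connectedComponentIn Kᶜ p := by
  obtain ⟨c, hcP, hcA⟩ := not_subset.1 (hr.not_connectedComponentIn_compl_subset hE hK hp hbd)
  have hc : ρ ≤ infDist c K := not_lt.1 hcA
  have hcK : ball c ρ ⊆ Kᶜ := (ball_subset_ball hc).trans ball_infDist_subset_compl
  exact ⟨c, hcP, hc, connectedComponentIn_eq hcP ▸ ball_subset_connectedComponentIn hcK⟩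

end NoRetraction

/-- **Proposition 2.7.**  Let `γ` be a closed plane curve with image `K`, and let
`A` be the open `1`-neighbourhood of `K`.  If `K` is a deformation retract of `A`
(there is a retraction `r : A → K ⊆ A` homotopic to the identity of `A`), then every
bounded connected component `P` of the complement of `K` contains a point `c` at
distance at least `1` from `K`; consequently the open unit ball centred at `c` is
contained in `P`. -/
theorem unit_disk_in_bounded_component
    (γ : ℝ → EuclideanSpace ℝ (Fin 2))
    (hγ : ContinuousOn γ (Set.Icc 0 1)) (hloop : γ 0 = γ 1)
    (K : Set (EuclideanSpace ℝ (Fin 2))) (hK : K = γ '' Set.Icc 0 1)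
    (A : Set (EuclideanSpace ℝ (Fin 2)))
    (hA : A = {p | Metric.infDist p K < 1})
    (r : C(A, A))
    (hrK : ∀ x : A, (r x : EuclideanSpace ℝ (Fin 2)) ∈ K)
    (hrid : ∀ x : A, (x : EuclideanSpace ℝ (Fin 2)) ∈ K →
      (r x : EuclideanSpace ℝ (Fin 2)) = (x : EuclideanSpace ℝ (Fin 2)))
    (hhom : r.Homotopic (ContinuousMap.id A)) :
    ∀ p : EuclideanSpace ℝ (Fin 2), p ∉ K →
      Bornology.IsBounded (connectedComponentIn Kᶜ p) →
      ∃ c ∈ connectedComponentIn Kᶜ p, 1 ≤ Metric.infDist c K ∧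
        Metric.ball c 1 ⊆ connectedComponentIn Kᶜ p := by
  subst hA
  intro p hp hbd
  have hKc : IsClosed K := hK ▸ (isCompact_Icc.image_of_continuousOn hγ).isClosed
  have hKA : K ⊆ {x | Metric.infDist x K < 1} := fun x hx ↦ by
    simp [Metric.infDist_zero_of_mem hx]
  obtain ⟨r', hr'⟩ := exists_isRetractionOn_of_continuousMap hKA r hrK hrid
  exact unit_disk_in_bounded_component_general finrank_euclideanSpace_fin hKc hr' hp hbd

end
end

section
/- Let γ : [0,1] → ℝ² be a closed curve of finite length ℓ (total variation). If every bounded connected component of the complement of the image of γ contains an open ball of radius 1, then the collection of bounded complementary components is finite and its cardinality is at most (ℓ/(2π))². -/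
open scoped ENNReal

noncomputable section

/-!
Let `K` be the image of the curve, `X` the union of `K` with the bounded components of its
complement, and `A` the set of centers of closed discs of radius `r` contained in `X`. The
`2r`-neighbourhood of `A` lies in the `r`-neighbourhood of `X`, which in turn is covered by `A` and
the `r`-neighbourhood of `K`. The Brunn–Minkowski inequality bounds the area of the first from below
by `(√|A| + 2r√π)²`. Rolling a disc of radius `r` along the curve sweeps out area at most
`πr² + 2rℓ`, since moving the disc by a distance `d` uncovers a crescent of area at most `2rd`.
Comparing the two bounds gives `4π|A| ≤ ℓ²`, and `r → 0` gives `4π|int X| ≤ ℓ²`. The interior of `X`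
contains one of the given discs for each bounded component, and these discs are disjoint.
-/

open MeasureTheory Set Metric Bornology
open scoped Pointwise Real

/-! ### The Brunn–Minkowski inequality in the plane -/

theorem volume_add_le_volume_add_of_isCompact {S T : Set ℝ} (hS : IsCompact S)
    (hT : IsCompact T) (hSne : S.Nonempty) (hTne : T.Nonempty) :
    volume S + volume T ≤ volume (S + T) := by
  obtain ⟨a, haS, ha⟩ := hS.exists_isGreatest hSne
  obtain ⟨b, hbT, hb⟩ := hT.exists_isLeast hTne
  have overlap : volume ((S + {b}) ∩ ({a} + T)) = 0 := by
    refine measure_mono_null (t := {a + b}) ?_ Real.volume_singleton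
    rintro _ ⟨⟨s, hs, _, rfl, rfl⟩, ⟨_, rfl, t, ht, hst⟩⟩
    dsimp only at hst ⊢
    rw [mem_singleton_iff]
    linarith [ha hs, hb ht]
  calc volume S + volume T = volume (S + {b}) + volume ({a} + T) := by simp
    _ = volume ((S + {b}) ∪ ({a} + T)) := by
      rw [← measure_union_add_inter _ (isCompact_singleton.add hT).measurableSet, overlap, add_zero]
    _ ≤ volume (S + T) := measure_mono <| union_subset
      (add_subset_add_left (singleton_subset_iff.2 hbT))
      (add_subset_add_right (singleton_subset_iff.2 haS))

theorem volume_add_le_volume_add {S T : Set ℝ} (hS : MeasurableSet S) (hT : MeasurableSet T)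
    (hSne : S.Nonempty) (hTne : T.Nonempty) : volume S + volume T ≤ volume (S + T) := by
  obtain ⟨s, hs⟩ := hSne
  obtain ⟨t, ht⟩ := hTne
  rw [hS.measure_eq_iSup_isCompact, hT.measure_eq_iSup_isCompact]
  simp only [iSup_and']
  refine ENNReal.biSup_add_biSup_le' ⟨∅, by simp⟩ ⟨∅, by simp⟩ ?_
  rintro P ⟨hPS, hP⟩ Q ⟨hQT, hQ⟩
  calc volume P + volume Q ≤ volume (insert s P) + volume (insert t Q) := by
        gcongr <;> exact subset_insert _ _
    _ ≤ volume (insert s P + insert t Q) :=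
      volume_add_le_volume_add_of_isCompact (hP.insert s) (hQ.insert t)
        (insert_nonempty s P) (insert_nonempty t Q)
    _ ≤ volume (S + T) := by
      gcongr
      exacts [insert_subset hs hPS, insert_subset ht hQT]

theorem lintegral_add_lintegral_le_of_min_le {f g h : ℝ → ℝ} (hf : Measurable f)
    (hg : Measurable g) (hh : Measurable h) (hf₀ : 0 ≤ f) (hg₀ : 0 ≤ g) (hh₀ : 0 ≤ h)
    {s : ℝ} (hfs : IsLUB (range f) s) (hgs : IsLUB (range g) s)
    (hmin : ∀ y z, min (f y) (g z) ≤ h (y + z)) :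
    (∫⁻ y, .ofReal (f y)) + ∫⁻ y, .ofReal (g y) ≤ ∫⁻ y, .ofReal (h y) := by
  have measurable_superlevel (u : ℝ → ℝ) : Measurable fun t => volume {y | t < u y} :=
    Antitone.measurable fun _ _ hst => measure_mono fun _ hy => hst.trans_lt hy
  have layerCake {u : ℝ → ℝ} (hu : Measurable u) (hu₀ : 0 ≤ u) :=
    lintegral_eq_lintegral_meas_lt volume (.of_forall hu₀) hu.aemeasurable
  rw [layerCake hf hf₀, layerCake hg hg₀, layerCake hh hh₀,
    ← lintegral_add_left (measurable_superlevel f)]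
  refine lintegral_mono fun t => ?_
  rcases lt_or_ge t s with hts | hst
  · obtain ⟨_, ⟨y, rfl⟩, hy, -⟩ := hfs.exists_between hts
    obtain ⟨_, ⟨z, rfl⟩, hz, -⟩ := hgs.exists_between hts
    refine (volume_add_le_volume_add (measurableSet_lt measurable_const hf)
      (measurableSet_lt measurable_const hg) ⟨y, hy⟩ ⟨z, hz⟩).trans (measure_mono ?_)
    rintro _ ⟨y, hy, z, hz, rfl⟩
    exact (lt_min hy hz).trans_le (hmin y z)
  · have superlevel_eq_empty {u : ℝ → ℝ} (hu : IsLUB (range u) s) : {y | t < u y} = ∅ :=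
      eq_empty_of_forall_notMem fun y hy => (hst.trans_lt hy).not_ge (hu.1 ⟨y, rfl⟩)
    simp [superlevel_eq_empty hfs, superlevel_eq_empty hgs]

/-- The length of the horizontal slice of `A` at height `y`. -/
def sliceLength (A : Set (ℝ × ℝ)) (y : ℝ) : ℝ :=
  volume.real ((·, y) ⁻¹' A)

theorem sliceLength_nonneg (A : Set (ℝ × ℝ)) : 0 ≤ sliceLength A :=
  fun _ => measureReal_nonneg

section Slices

variable {A B : Set (ℝ × ℝ)} (hA : IsCompact A) (hB : IsCompact B)
include hA

theorem isCompact_slice (y : ℝ) : IsCompact ((·, y) ⁻¹' A) :=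
  (hA.image continuous_fst).of_isClosed_subset (hA.isClosed.preimage (by fun_prop))
    fun _ hx => ⟨_, hx, rfl⟩

theorem measurable_sliceLength : Measurable (sliceLength A) :=
  (measurable_measure_prodMk_right hA.measurableSet).ennreal_toReal

theorem bddAbove_range_sliceLength : BddAbove (range (sliceLength A)) := by
  refine ⟨volume.real (Prod.fst '' A), ?_⟩
  rintro _ ⟨y, rfl⟩
  exact measureReal_mono (fun x hx => ⟨(x, y), hx, rfl⟩) (hA.image continuous_fst).measure_ne_top

theorem lintegral_sliceLength : ∫⁻ y, .ofReal (sliceLength A y) = volume A := by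
  rw [Measure.volume_eq_prod, Measure.prod_apply_symm hA.measurableSet]
  exact lintegral_congr fun y => ofReal_measureReal (isCompact_slice hA y).measure_ne_top

theorem lintegral_sliceLength_div {M : ℝ} (hM : 0 < M) :
    ∫⁻ y, .ofReal (sliceLength A y / M) = .ofReal (volume.real A / M) := by
  simp_rw [ENNReal.ofReal_div_of_pos hM, div_eq_mul_inv]
  rw [lintegral_mul_const _ (measurable_sliceLength hA).ennreal_ofReal, lintegral_sliceLength hA,
    ofReal_measureReal hA.measure_ne_top]

theorem exists_isLUB_range_sliceLength_div (hpos : 0 < volume.real A) :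
    ∃ M > 0, IsLUB (range fun y => sliceLength A y / M) 1 := by
  have hbdd := bddAbove_range_sliceLength hA
  have sup_pos : 0 < ⨆ y, sliceLength A y := by
    by_contra! hsup
    have slice_eq_zero (y : ℝ) : sliceLength A y = 0 :=
      ((le_ciSup hbdd y).trans hsup).antisymm (sliceLength_nonneg A y)
    have := lintegral_sliceLength hA
    simp only [slice_eq_zero, ENNReal.ofReal_zero, lintegral_zero] at this
    simp [measureReal_def, ← this] at hpos
  refine ⟨_, sup_pos, ?_⟩
  have := (isLUB_ciSup hbdd).mul_right (inv_nonneg.2 sup_pos.le)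
  rwa [← range_comp, mul_inv_cancel₀ sup_pos.ne'] at this

include hB

theorem sliceLength_add_sliceLength_le {y z : ℝ} (hy : 0 < sliceLength A y)
    (hz : 0 < sliceLength B z) :
    sliceLength A y + sliceLength B z ≤ sliceLength (A + B) (y + z) := by
  have hAy := isCompact_slice hA y
  have hBz := isCompact_slice hB z
  have hsum := volume_add_le_volume_add_of_isCompact hAy hBz
    (nonempty_of_measureReal_ne_zero hy.ne') (nonempty_of_measureReal_ne_zero hz.ne')
  have hsub : (·, y) ⁻¹' A + (·, z) ⁻¹' B ⊆ (·, y + z) ⁻¹' (A + B) := by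
    rintro _ ⟨s, hs, t, ht, rfl⟩
    exact ⟨_, hs, _, ht, rfl⟩
  have hfin := (isCompact_slice (hA.add hB) (y + z)).measure_ne_top (μ := volume)
  rw [sliceLength, sliceLength, measureReal_def, measureReal_def,
    ← ENNReal.toReal_add hAy.measure_ne_top hBz.measure_ne_top]
  exact ENNReal.toReal_mono hfin (hsum.trans (measure_mono hsub))

/-- Henstock and Macbeath: after rescaling the slice lengths of `A` and `B` to have supremum `1`,
their superlevel sets at equal heights are nonempty and add up to superlevel sets of `A + B`. -/
theorem exists_volume_div_add_volume_div_le (hApos : 0 < volume.real A)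
    (hBpos : 0 < volume.real B) : ∃ M > 0, ∃ m > 0,
      volume.real A / M + volume.real B / m ≤ volume.real (A + B) / (M + m) := by
  obtain ⟨M, hM, hAM⟩ := exists_isLUB_range_sliceLength_div hA hApos
  obtain ⟨m, hm, hBm⟩ := exists_isLUB_range_sliceLength_div hB hBpos
  refine ⟨M, hM, m, hm, ?_⟩
  have hMm := add_pos hM hm
  have hmin (y z : ℝ) : min (sliceLength A y / M) (sliceLength B z / m) ≤
      sliceLength (A + B) (y + z) / (M + m) := by
    set t := min (sliceLength A y / M) (sliceLength B z / m)
    rcases le_or_gt t 0 with ht | ht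
    · exact ht.trans (div_nonneg (sliceLength_nonneg _ _) hMm.le)
    have htA : t * M ≤ sliceLength A y := (le_div_iff₀ hM).1 (min_le_left _ _)
    have htB : t * m ≤ sliceLength B z := (le_div_iff₀ hm).1 (min_le_right _ _)
    rw [le_div_iff₀ hMm, mul_add]
    exact (add_le_add htA htB).trans <| sliceLength_add_sliceLength_le hA hB
      ((mul_pos ht hM).trans_le htA) ((mul_pos ht hm).trans_le htB)
  have := lintegral_add_lintegral_le_of_min_le ((measurable_sliceLength hA).div_const M)
    ((measurable_sliceLength hB).div_const m)
    ((measurable_sliceLength (hA.add hB)).div_const (M + m))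
    (fun y => div_nonneg (sliceLength_nonneg A y) hM.le)
    (fun y => div_nonneg (sliceLength_nonneg B y) hm.le)
    (fun y => div_nonneg (sliceLength_nonneg (A + B) y) hMm.le) hAM hBm hmin
  rwa [lintegral_sliceLength_div hA hM, lintegral_sliceLength_div hB hm,
    lintegral_sliceLength_div (hA.add hB) hMm, ← ENNReal.ofReal_add (by positivity) (by positivity),
    ENNReal.ofReal_le_ofReal_iff (by positivity)] at this

end Slices

theorem sqrt_add_sqrt_le_sqrt_of_div_add_div_le {a b c M m : ℝ} (ha : 0 ≤ a) (hb : 0 ≤ b)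
    (hM : 0 < M) (hm : 0 < m) (h : a / M + b / m ≤ c / (M + m)) : √a + √b ≤ √c := by
  apply Real.le_sqrt_of_sq_le
  have cauchy := Finset.sq_sum_div_le_sum_sq_div .univ ![√a, √b] (g := ![M, m])
    (by simp [Fin.forall_fin_two, hM, hm])
  simp only [Fin.sum_univ_two, Matrix.cons_val_zero, Matrix.cons_val_one, Real.sq_sqrt ha,
    Real.sq_sqrt hb] at cauchy
  exact (div_le_div_iff_of_pos_right (add_pos hM hm)).1 (cauchy.trans h)

theorem measureReal_le_measureReal_add {G : Type*} [AddGroup G] [TopologicalSpace G]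
    [IsTopologicalAddGroup G] [MeasurableSpace G] [MeasurableAdd G] (μ : Measure G)
    [μ.IsAddLeftInvariant] [IsFiniteMeasureOnCompacts μ]
    {A B : Set G} (hA : IsCompact A) (hB : IsCompact B) (hAne : A.Nonempty) :
    μ.real B ≤ μ.real (A + B) := by
  obtain ⟨a, ha⟩ := hAne
  calc μ.real B = μ.real (a +ᵥ B) := by simp_rw [measureReal_def, measure_vadd]
    _ ≤ μ.real (A + B) :=
      measureReal_mono (vadd_set_subset_add ha) (hA.add hB).measure_ne_top

theorem brunnMinkowski_prod {A B : Set (ℝ × ℝ)} (hA : IsCompact A) (hB : IsCompact B)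
    (hAne : A.Nonempty) (hBne : B.Nonempty) :
    √(volume.real A) + √(volume.real B) ≤ √(volume.real (A + B)) := by
  rcases measureReal_nonneg.eq_or_lt' (a := volume.real A) with hA₀ | hApos
  · simpa [hA₀] using Real.sqrt_le_sqrt (measureReal_le_measureReal_add volume hA hB hAne)
  rcases measureReal_nonneg.eq_or_lt' (a := volume.real B) with hB₀ | hBpos
  · simpa [hB₀, add_comm B] using
      Real.sqrt_le_sqrt (measureReal_le_measureReal_add volume hB hA hBne)
  obtain ⟨M, hM, m, hm, h⟩ := exists_volume_div_add_volume_div_le hA hB hApos hBpos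
  exact sqrt_add_sqrt_le_sqrt_of_div_add_div_le hApos.le hBpos.le hM hm h

/-- The Euclidean plane as a product of two lines, so that its area can be computed by slicing. -/
def planeEquivProd : EuclideanSpace ℝ (Fin 2) ≃L[ℝ] ℝ × ℝ :=
  (EuclideanSpace.equiv (Fin 2) ℝ).trans (.finTwoArrow ℝ ℝ)

theorem measurePreserving_planeEquivProd : MeasurePreserving planeEquivProd :=
  (volume_preserving_finTwoArrow ℝ).comp (PiLp.volume_preserving_ofLp (Fin 2))

theorem measurePreserving_planeEquivProd_symm : MeasurePreserving planeEquivProd.symm :=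
  measurePreserving_planeEquivProd.symm planeEquivProd.toHomeomorph.toMeasurableEquiv

theorem norm_planeEquivProd_symm (p : ℝ × ℝ) : ‖planeEquivProd.symm p‖ = √(p.1 ^ 2 + p.2 ^ 2) := by
  simp [planeEquivProd, EuclideanSpace.norm_eq]

theorem brunnMinkowski_plane {A B : Set (EuclideanSpace ℝ (Fin 2))} (hA : IsCompact A)
    (hB : IsCompact B) (hAne : A.Nonempty) (hBne : B.Nonempty) :
    √(volume.real A) + √(volume.real B) ≤ √(volume.real (A + B)) := by
  have volume_image (S : Set (EuclideanSpace ℝ (Fin 2))) (hS : IsCompact S) :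
      volume.real (planeEquivProd '' S) = volume.real S := by
    rw [measureReal_def, planeEquivProd.image_eq_preimage_symm,
      measurePreserving_planeEquivProd_symm.measure_preimage hS.measurableSet.nullMeasurableSet,
      measureReal_def]
  have := brunnMinkowski_prod (hA.image planeEquivProd.continuous)
    (hB.image planeEquivProd.continuous) (hAne.image _) (hBne.image _)
  rwa [← image_add, volume_image A hA, volume_image B hB, volume_image _ (hA.add hB)] at this

theorem sqrt_volume_add_le_sqrt_volume_cthickening {A : Set (EuclideanSpace ℝ (Fin 2))}
    (hA : IsCompact A) (hAne : A.Nonempty) {r : ℝ} (hr : 0 ≤ r) :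
    √(volume.real A) + r * √π ≤ √(volume.real (cthickening r A)) := by
  have h := brunnMinkowski_plane hA (isCompact_closedBall 0 r) hAne (nonempty_closedBall.2 hr)
  rwa [hA.add_closedBall_zero hr, measureReal_def volume (closedBall _ _),
    EuclideanSpace.volume_closedBall_fin_two, ENNReal.toReal_mul, ENNReal.toReal_pow,
    ENNReal.toReal_ofReal hr, ENNReal.toReal_ofReal Real.pi_nonneg, Real.sqrt_mul (sq_nonneg r),
    Real.sqrt_sq hr] at h

theorem preimage_ball_diff_closedBall_subset_regionBetween {d ρ : ℝ} (hd : 0 ≤ d) (hρ : 0 ≤ ρ) :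
    planeEquivProd.symm ⁻¹' (ball (planeEquivProd.symm (0, d)) ρ \ closedBall 0 ρ) ⊆
      regionBetween (fun x => √(ρ ^ 2 - x ^ 2)) (fun x => √(ρ ^ 2 - x ^ 2) + d) (Ioo (-ρ) ρ) := by
  rintro ⟨x, y⟩ ⟨hin, hout⟩
  rw [mem_ball_iff_norm, ← map_sub, norm_planeEquivProd_symm] at hin
  have hρ₀ : 0 < ρ := (Real.sqrt_nonneg _).trans_lt hin
  rw [Real.sqrt_lt' hρ₀, Prod.mk_sub_mk, sub_zero] at hin
  rw [mem_closedBall_zero_iff, norm_planeEquivProd_symm, Real.sqrt_le_left hρ, not_le] at hout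
  have hy : 0 < y := by
    by_contra! hy
    nlinarith
  refine ⟨abs_lt.1 (abs_lt_of_sq_lt_sq (by nlinarith [sq_nonneg (y - d)]) hρ), ?_, ?_⟩
  · exact (Real.sqrt_lt' hy).2 (by linarith)
  · exact sub_lt_iff_lt_add.1 (Real.lt_sqrt_of_sq_lt (by linarith))

theorem volume_ball_diff_ball_zero_le {d ρ : ℝ} (hd : 0 ≤ d) (hρ : 0 ≤ ρ) :
    volume (ball (planeEquivProd.symm (0, d)) ρ \ ball 0 ρ) ≤ .ofReal (2 * ρ * d) := by
  set q := planeEquivProd.symm (0, d)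
  have crescent : volume (ball q ρ \ closedBall 0 ρ) ≤ .ofReal (2 * ρ * d) := by
    rw [← measurePreserving_planeEquivProd_symm.measure_preimage
      (measurableSet_ball.diff measurableSet_closedBall).nullMeasurableSet]
    refine (measure_mono
      (preimage_ball_diff_closedBall_subset_regionBetween hd hρ)).trans (le_of_eq ?_)
    rw [Measure.volume_eq_prod, volume_regionBetween_eq_lintegral' (by fun_prop) (by fun_prop)
      measurableSet_Ioo]
    simp only [Pi.sub_apply, add_sub_cancel_left, setLIntegral_const, Real.volume_Ioo]
    rw [← ENNReal.ofReal_mul hd]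
    ring_nf
  calc volume (ball q ρ \ ball 0 ρ) ≤ volume ((ball q ρ \ closedBall 0 ρ) ∪ sphere 0 ρ) := by
        rw [← ball_union_sphere]
        exact measure_mono fun x ⟨hx, hx₀⟩ =>
          or_iff_not_imp_right.2 fun hxs => ⟨hx, fun h => h.elim hx₀ hxs⟩
    _ ≤ volume (ball q ρ \ closedBall 0 ρ) + volume (sphere 0 ρ) := measure_union_le _ _
    _ ≤ .ofReal (2 * ρ * d) := by rwa [Measure.addHaar_sphere, add_zero]

theorem volume_ball_diff_ball_le (p q : EuclideanSpace ℝ (Fin 2)) {ρ : ℝ} (hρ : 0 ≤ ρ) :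
    volume (ball q ρ \ ball p ρ) ≤ .ofReal (2 * ρ * dist q p) := by
  set w := planeEquivProd.symm (0, dist q p) with hw
  have norm_w : ‖w‖ = ‖q - p‖ := by simp [hw, norm_planeEquivProd_symm, dist_eq_norm]
  set R := (ℝ ∙ (w - (q - p)))ᗮ.reflection
  have map_w : R w = q - p := Submodule.reflection_sub norm_w
  have motion : MeasurePreserving fun x => R x + p :=
    (measurePreserving_add_right volume p).comp R.measurePreserving
  have preimage_diff : (fun x => R x + p) ⁻¹' (ball q ρ \ ball p ρ) = ball w ρ \ ball 0 ρ := by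
    ext x
    have : R x + p - q = R (x - w) := by rw [map_sub, map_w]; abel
    simp only [mem_preimage, mem_sdiff, mem_ball_iff_norm, this, add_sub_cancel_right, sub_zero,
      LinearIsometryEquiv.norm_map]
  rw [← motion.measure_preimage (measurableSet_ball.diff measurableSet_ball).nullMeasurableSet,
    preimage_diff]
  exact volume_ball_diff_ball_zero_le dist_nonneg hρ

/-! ### The area of a tube around a curve -/

theorem volume_biUnion_ball_le (p : ℕ → EuclideanSpace ℝ (Fin 2)) {ρ : ℝ} (hρ : 0 ≤ ρ) (n : ℕ) :
    volume (⋃ i ≤ n, ball (p i) ρ) ≤ .ofReal (π * ρ ^ 2) +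
      .ofReal (2 * ρ) * ∑ i ∈ Finset.range n, edist (p (i + 1)) (p i) := by
  induction n with
  | zero => simp [ENNReal.ofReal_mul Real.pi_nonneg, ENNReal.ofReal_pow hρ, mul_comm]
  | succ n ih =>
    have new_part : (⋃ i ≤ n + 1, ball (p i) ρ) ⊆
        (⋃ i ≤ n, ball (p i) ρ) ∪ ball (p (n + 1)) ρ \ ball (p n) ρ := by
      rw [biUnion_le_succ, union_subset_iff]
      exact ⟨subset_union_left, fun x hx => or_iff_not_imp_right.2 fun hx' =>
        mem_biUnion (mem_Iic.2 le_rfl) (not_not.1 fun h => hx' ⟨hx, h⟩)⟩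
    rw [Finset.sum_range_succ, mul_add, ← add_assoc]
    refine (measure_mono new_part).trans ((measure_union_le _ _).trans (add_le_add ih ?_))
    rw [edist_dist, ← ENNReal.ofReal_mul (by positivity)]
    exact volume_ball_diff_ball_le _ _ hρ

theorem exists_monotone_forall_exists_dist_lt {E : Type*} [PseudoMetricSpace E] {γ : ℝ → E}
    {a b : ℝ} (hab : a ≤ b) (hγ : ContinuousOn γ (Icc a b)) {ε : ℝ} (hε : 0 < ε) :
    ∃ (u : ℕ → ℝ) (n : ℕ), Monotone u ∧ (∀ i, u i ∈ Icc a b) ∧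
      ∀ t ∈ Icc a b, ∃ i ≤ n, dist (γ t) (γ (u i)) < ε := by
  have hγ' : Continuous fun t : Icc a b => γ t := hγ.domRestrict
  obtain ⟨u, hu₀, hu, ⟨n, hn⟩, hball⟩ := exists_monotone_Icc_subset_open_cover_Icc hab
    (fun s : Icc a b => isOpen_ball.preimage hγ' (t := ball (γ s) (ε / 2)))
    (fun s _ => mem_iUnion.2 ⟨s, mem_ball_self (half_pos hε)⟩)
  refine ⟨fun i => u i, n, fun _ _ hij => hu hij, fun i => (u i).2, fun t ht => ?_⟩
  obtain ⟨i, hi, hit⟩ : ∃ i ≤ n, t ∈ Icc (u i : ℝ) (u (i + 1)) := by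
    by_contra! hout
    have u_le (i : ℕ) (hi : i ≤ n + 1) : u i ≤ t := by
      induction i with
      | zero => simpa [hu₀] using ht.1
      | succ i ih =>
        have hi' := Nat.le_of_succ_le_succ hi
        by_contra! hlt
        exact hout i hi' ⟨ih (hi'.trans n.le_succ), hlt.le⟩
    refine hout n le_rfl ⟨u_le n n.le_succ, ?_⟩
    simpa [hn (n + 1) n.le_succ] using ht.2
  obtain ⟨s, hs⟩ := hball i
  have dist_lt (v : Icc a b) (hv : v ∈ Icc (u i) (u (i + 1))) : dist (γ v) (γ s) < ε / 2 := hs hv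
  refine ⟨i, hi, ?_⟩
  have := dist_triangle_right (γ t) (γ (u i)) (γ s)
  linarith [dist_lt ⟨t, ht⟩ hit, dist_lt (u i) (left_mem_Icc.2 (hu i.le_succ))]

theorem volume_cthickening_image_Icc_le {γ : ℝ → EuclideanSpace ℝ (Fin 2)} {a b : ℝ}
    (hγ : ContinuousOn γ (Icc a b)) {r : ℝ} (hr : 0 < r) :
    volume (cthickening r (γ '' Icc a b)) ≤
      .ofReal (π * r ^ 2) + .ofReal (2 * r) * eVariationOn γ (Icc a b) := by
  rcases lt_or_ge b a with hba | hab
  · simp [hba]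
  have bound {ε : ℝ} (hε : 0 < ε) : volume (cthickening r (γ '' Icc a b)) ≤
      .ofReal (π * (r + ε) ^ 2) + .ofReal (2 * (r + ε)) * eVariationOn γ (Icc a b) := by
    obtain ⟨u, n, hu, hmem, hdense⟩ := exists_monotone_forall_exists_dist_lt hab hγ hε
    have cover : cthickening r (γ '' Icc a b) ⊆ ⋃ i ≤ n, ball (γ (u i)) (r + ε) := by
      rw [(isCompact_Icc.image_of_continuousOn hγ).cthickening_eq_biUnion_closedBall hr.le,
        biUnion_image]
      refine iUnion₂_subset fun t ht => ?_
      obtain ⟨i, hi, hdist⟩ := hdense t ht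
      have : closedBall (γ t) r ⊆ ball (γ (u i)) (r + ε) := closedBall_subset_ball' (by gcongr)
      exact this.trans (subset_biUnion_of_mem (u := fun i => ball (γ (u i)) (r + ε)) hi)
    refine (measure_mono cover).trans
      ((volume_biUnion_ball_le (fun i => γ (u i)) (by positivity) n).trans ?_)
    gcongr
    exact eVariationOn.sum_le hu hmem
  have tendsto_bound : Filter.Tendsto (fun ε => ENNReal.ofReal (π * (r + ε) ^ 2) +
      .ofReal (2 * (r + ε)) * eVariationOn γ (Icc a b)) (nhdsWithin 0 (Ioi 0))
      (nhds (.ofReal (π * r ^ 2) + .ofReal (2 * r) * eVariationOn γ (Icc a b))) := by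
    have tendsto_ofReal {f : ℝ → ℝ} (hf : Continuous f) : Filter.Tendsto
        (fun ε => ENNReal.ofReal (f ε)) (nhdsWithin 0 (Ioi 0)) (nhds (.ofReal (f 0))) :=
      ((ENNReal.continuous_ofReal.comp hf).tendsto 0).mono_left nhdsWithin_le_nhds
    have h₁ := tendsto_ofReal (f := fun ε => π * (r + ε) ^ 2) (by fun_prop)
    have h₂ := tendsto_ofReal (f := fun ε => 2 * (r + ε)) (by fun_prop)
    simp only [add_zero] at h₁ h₂
    exact h₁.add (ENNReal.Tendsto.mul_const h₂ (.inl (by simpa using hr)))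
  refine ge_of_tendsto tendsto_bound ?_
  filter_upwards [self_mem_nhdsWithin] with ε hε using bound hε

/-! ### Filled hulls and their inner parallel sets -/

/-- The union of `K` with the bounded components of its complement. Points of `K` belong to it
because `connectedComponentIn Kᶜ x` is empty for `x ∈ K`. -/
def filledHull {X : Type*} [TopologicalSpace X] [Bornology X] (K : Set X) : Set X :=
  {x | IsBounded (connectedComponentIn Kᶜ x)}

section FilledHull

variable {X : Type*} [TopologicalSpace X] [Bornology X] {K : Set X}

theorem subset_filledHull : K ⊆ filledHull K := fun x hx => by
  simp [filledHull, connectedComponentIn_eq_empty (notMem_compl_iff.2 hx)]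

theorem mem_filledHull_iff_of_mem_connectedComponentIn {x y : X}
    (hy : y ∈ connectedComponentIn Kᶜ x) : y ∈ filledHull K ↔ x ∈ filledHull K := by
  simp only [filledHull, mem_ofPred_eq, connectedComponentIn_eq hy]

theorem subset_filledHull_of_isPreconnected {s : Set X} (hs : IsPreconnected s)
    (hsK : Disjoint s K) (hne : (s ∩ filledHull K).Nonempty) : s ⊆ filledHull K := by
  obtain ⟨x, hxs, hx⟩ := hne
  exact fun y hy => (mem_filledHull_iff_of_mem_connectedComponentIn
    (hs.subset_connectedComponentIn hxs hsK.subset_compl_right hy)).2 hx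

theorem isClosed_filledHull [LocallyConnectedSpace X] (hK : IsClosed K) :
    IsClosed (filledHull K) := by
  refine isOpen_compl_iff.1 (isOpen_iff_mem_nhds.2 fun x hx => ?_)
  have hxK : x ∈ Kᶜ := fun hxK => hx (subset_filledHull hxK)
  filter_upwards [hK.isOpen_compl.connectedComponentIn.mem_nhds (mem_connectedComponentIn hxK)]
    with y hy using (mem_filledHull_iff_of_mem_connectedComponentIn hy).not.2 hx

end FilledHull

theorem filledHull_subset_closedBall {E : Type*} [NormedAddCommGroup E] [NormedSpace ℝ E]
    {K : Set E} {R : ℝ} (hR : 0 ≤ R) (hK : K ⊆ closedBall 0 R) :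
    filledHull K ⊆ closedBall 0 R := by
  intro x hx
  by_contra! hxR
  rw [mem_closedBall_zero_iff, not_le] at hxR
  have hx₀ : 0 < ‖x‖ := hR.trans_lt hxR
  have norm_ray {t : ℝ} (ht : 1 ≤ t) : ‖t • x‖ = t * ‖x‖ := by
    rw [norm_smul, Real.norm_of_nonneg (zero_le_one.trans ht)]
  have ray_subset : (· • x) '' Ici (1 : ℝ) ⊆ connectedComponentIn Kᶜ x := by
    refine (isPreconnected_Ici.image _ (by fun_prop)).subset_connectedComponentIn
      ⟨1, self_mem_Ici, one_smul ℝ x⟩ ?_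
    rintro _ ⟨t, ht, rfl⟩ htK
    have := mem_closedBall_zero_iff.1 (hK htK)
    rw [norm_ray ht] at this
    nlinarith [mem_Ici.1 ht]
  obtain ⟨C, hC⟩ := (hx.subset ray_subset).exists_norm_le
  have ht : 1 ≤ 1 + |C| / ‖x‖ := le_add_of_nonneg_right (by positivity)
  have := hC _ ⟨_, ht, rfl⟩
  rw [norm_ray ht, add_mul, one_mul, div_mul_cancel₀ _ hx₀.ne'] at this
  linarith [le_abs_self C]

theorem isCompact_filledHull {E : Type*} [NormedAddCommGroup E] [NormedSpace ℝ E]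
    [ProperSpace E] {K : Set E} (hK : IsCompact K) : IsCompact (filledHull K) := by
  obtain ⟨R, hR⟩ := hK.isBounded.subset_closedBall 0
  exact (isCompact_closedBall 0 (max R 0)).of_isClosed_subset (isClosed_filledHull hK.isClosed)
    (filledHull_subset_closedBall (le_max_right _ _)
      (hR.trans (closedBall_subset_closedBall (le_max_left _ _))))

/-- The inner parallel set of `S` at distance `r`: the centers of the closed balls of radius `r`
inside `S`. -/
def innerParallelSet {X : Type*} [PseudoMetricSpace X] (r : ℝ) (S : Set X) : Set X :=
  {x | closedBall x r ⊆ S}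

theorem isCompact_innerParallelSet {E : Type*} [NormedAddCommGroup E] {S : Set E}
    (hS : IsCompact S) {r : ℝ} (hr : 0 ≤ r) : IsCompact (innerParallelSet r S) := by
  have eq_iInter : innerParallelSet r S = ⋂ v ∈ closedBall (0 : E) r, (· + v) ⁻¹' S := by
    ext x
    have : closedBall x r = (x + ·) '' closedBall 0 r := by simp
    simp only [innerParallelSet, mem_ofPred_eq, this, image_subset_iff, mem_iInter, mem_preimage]
    rfl
  rw [eq_iInter]
  refine hS.of_isClosed_subset (isClosed_biInter fun v _ => hS.isClosed.preimage (by fun_prop)) ?_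
  rw [← eq_iInter]
  exact fun x hx => hx (mem_closedBall_self hr)

theorem cthickening_innerParallelSet_subset {E : Type*} [NormedAddCommGroup E] {S : Set E}
    (hS : IsCompact S) {r : ℝ} (hr : 0 ≤ r) : cthickening r (innerParallelSet r S) ⊆ S := by
  rw [(isCompact_innerParallelSet hS hr).cthickening_eq_biUnion_closedBall hr]
  exact iUnion₂_subset fun x hx => hx

theorem cthickening_filledHull_subset {E : Type*} [NormedAddCommGroup E] [NormedSpace ℝ E]
    [ProperSpace E] {K : Set E} (hK : IsCompact K) {r : ℝ} (hr : 0 ≤ r) :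
    cthickening r (filledHull K) ⊆ innerParallelSet r (filledHull K) ∪ cthickening r K := by
  intro x hx
  rw [(isCompact_filledHull hK).cthickening_eq_biUnion_closedBall hr, mem_iUnion₂] at hx
  obtain ⟨y, hy, hxy⟩ := hx
  refine or_iff_not_imp_right.2 fun hxK => ?_
  refine subset_filledHull_of_isPreconnected (convex_closedBall x r).isPreconnected ?_
    ⟨y, mem_closedBall_comm.1 hxy, hy⟩
  exact disjoint_left.2 fun z hzx hzK =>
    hxK (mem_cthickening_of_dist_le x z r K hzK (mem_closedBall'.1 hzx))

/-! ### An isoperimetric inequality -/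

section Isoperimetric

variable {K : Set (EuclideanSpace ℝ (Fin 2))} (hK : IsCompact K) {L : ℝ}
include hK

theorem four_pi_mul_volume_innerParallelSet_filledHull_le {r : ℝ} (hr : 0 < r)
    (htube : volume.real (cthickening r K) ≤ π * r ^ 2 + 2 * r * L) :
    4 * π * volume.real (innerParallelSet r (filledHull K)) ≤ L ^ 2 := by
  have hX := isCompact_filledHull hK
  have hA := isCompact_innerParallelSet hX hr.le
  set X := filledHull K
  set A := innerParallelSet r X
  rcases A.eq_empty_or_nonempty with hA₀ | hAne
  · simpa [hA₀] using sq_nonneg L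
  have growth : √(volume.real A) + (r + r) * √π ≤ √(volume.real (cthickening r X)) := by
    refine (sqrt_volume_add_le_sqrt_volume_cthickening hA hAne (by positivity)).trans ?_
    rw [← cthickening_cthickening hr.le hr.le]
    exact Real.sqrt_le_sqrt (measureReal_mono
      (cthickening_subset_of_subset r (cthickening_innerParallelSet_subset hX hr.le))
      hX.cthickening.measure_ne_top)
  have shell : volume.real (cthickening r X) ≤ volume.real A + (π * r ^ 2 + 2 * r * L) :=
    calc volume.real (cthickening r X) ≤ volume.real (A ∪ cthickening r K) :=
          measureReal_mono (cthickening_filledHull_subset hK hr.le)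
            (hA.union hK.cthickening).measure_ne_top
      _ ≤ volume.real A + volume.real (cthickening r K) := measureReal_union_le _ _
      _ ≤ volume.real A + (π * r ^ 2 + 2 * r * L) := by gcongr
  have two_sqrt_pi_mul_sqrt_le : 2 * √π * √(volume.real A) ≤ L := by
    have expand : (√(volume.real A) + (r + r) * √π) ^ 2 =
        volume.real A + 2 * r * (2 * √π * √(volume.real A)) + 4 * (π * r ^ 2) := by
      linear_combination Real.sq_sqrt (measureReal_nonneg (μ := volume) (s := A)) +
        4 * r ^ 2 * Real.sq_sqrt Real.pi_nonneg
    have growth_sq := (Real.le_sqrt (by positivity) measureReal_nonneg).1 growth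
    have hdisc : 0 ≤ π * r ^ 2 := by positivity
    refine le_of_mul_le_mul_left ?_ (mul_pos two_pos hr)
    linarith
  calc 4 * π * volume.real A = (2 * √π * √(volume.real A)) ^ 2 := by
        rw [mul_pow, mul_pow, Real.sq_sqrt Real.pi_nonneg, Real.sq_sqrt measureReal_nonneg]
        norm_num
    _ ≤ L ^ 2 := by gcongr

theorem four_pi_mul_volume_interior_filledHull_le
    (htube : ∀ r > 0, volume.real (cthickening r K) ≤ π * r ^ 2 + 2 * r * L) :
    4 * π * volume.real (interior (filledHull K)) ≤ L ^ 2 := by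
  have hX := isCompact_filledHull hK
  have hπ : 0 < 4 * π := by positivity
  rw [← le_div_iff₀' hπ]
  refine ENNReal.toReal_le_of_le_ofReal (by positivity) ?_
  rw [isOpen_interior.measure_eq_iSup_isCompact]
  refine iSup₂_le fun Q hQ => iSup_le fun hQc => ?_
  obtain ⟨r, hr, hQr⟩ := hQc.exists_cthickening_subset_open isOpen_interior hQ
  have hQA : Q ⊆ innerParallelSet r (filledHull K) := fun x hx =>
    (closedBall_subset_cthickening hx r).trans (hQr.trans interior_subset)
  refine (measure_mono hQA).trans ?_
  rw [← ofReal_measureReal (isCompact_innerParallelSet hX hr.le).measure_ne_top]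
  apply ENNReal.ofReal_le_ofReal
  rw [le_div_iff₀' hπ]
  exact four_pi_mul_volume_innerParallelSet_filledHull_le hK hr (htube r hr)

end Isoperimetric

theorem isoperimetric_filledHull_image_Icc {γ : ℝ → EuclideanSpace ℝ (Fin 2)} {a b : ℝ}
    (hγ : ContinuousOn γ (Icc a b)) (hbv : BoundedVariationOn γ (Icc a b)) :
    4 * π * volume.real (interior (filledHull (γ '' Icc a b))) ≤
      (eVariationOn γ (Icc a b)).toReal ^ 2 := by
  refine four_pi_mul_volume_interior_filledHull_le (isCompact_Icc.image_of_continuousOn hγ)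
    fun r hr => ENNReal.toReal_le_of_le_ofReal (by positivity) ?_
  rw [ENNReal.ofReal_add (by positivity) (by positivity),
    ENNReal.ofReal_mul (p := 2 * r) (by positivity), ENNReal.ofReal_toReal hbv]
  exact volume_cthickening_image_Icc_le hγ hr

/-! ### Counting bounded complementary components -/

/-- The bounded connected components of the complement of `K`. -/
def boundedComponents {X : Type*} [TopologicalSpace X] [Bornology X] (K : Set X) : Set (Set X) :=
  {C | ∃ p ∉ K, C = connectedComponentIn Kᶜ p ∧ IsBounded C}

section BoundedComponents

variable {X : Type*} [TopologicalSpace X] [Bornology X] {K : Set X}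

theorem subset_filledHull_of_mem_boundedComponents {C : Set X} (hC : C ∈ boundedComponents K) :
    C ⊆ filledHull K := by
  obtain ⟨p, -, rfl, hp⟩ := hC
  exact fun x hx => (mem_filledHull_iff_of_mem_connectedComponentIn hx).2 hp

theorem pairwiseDisjoint_boundedComponents : (boundedComponents K).PairwiseDisjoint id := by
  rintro _ ⟨p, -, rfl, -⟩ _ ⟨q, -, rfl, -⟩ hpq
  refine disjoint_left.2 fun x hxp hxq => hpq ?_
  exact (connectedComponentIn_eq hxp).trans (connectedComponentIn_eq hxq).symm

end BoundedComponents

section BallPacking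

variable {E : Type*} [NormedAddCommGroup E] [MeasurableSpace E] [BorelSpace E] (μ : Measure E)
  [μ.IsAddHaarMeasure] {𝒞 : Set (Set E)} (hdisj : 𝒞.PairwiseDisjoint id) {U : Set E}
  (hU : ∀ C ∈ 𝒞, C ⊆ U) {ρ : ℝ} (hball : ∀ C ∈ 𝒞, ∃ c, ball c ρ ⊆ C)
include hdisj hU hball

theorem encard_mul_measure_ball_le : 𝒞.encard * μ (ball 0 ρ) ≤ μ (interior U) := by
  choose! c hc using hball
  calc 𝒞.encard * μ (ball 0 ρ) = ∑' C : 𝒞, μ (ball (c C) ρ) := by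
        simp_rw [Measure.addHaar_ball_center, ENNReal.tsum_set_const]
    _ ≤ μ (⋃ C : 𝒞, ball (c C) ρ) := by
        refine tsum_meas_le_meas_iUnion_of_disjoint μ (fun _ => measurableSet_ball) ?_
        exact fun C D hCD => (hdisj C.2 D.2 (Subtype.coe_injective.ne hCD)).mono
          (hc C C.2) (hc D D.2)
    _ ≤ μ (interior U) := measure_mono <| iUnion_subset fun C =>
        isOpen_ball.subset_interior_iff.2 ((hc C C.2).trans (hU C C.2))

theorem finite_and_ncard_mul_measureReal_ball_le (hρ : 0 < ρ) (hfin : μ (interior U) ≠ ∞) :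
    𝒞.Finite ∧ 𝒞.ncard * μ.real (ball 0 ρ) ≤ μ.real (interior U) := by
  have hpack := encard_mul_measure_ball_le μ hdisj hU hball
  have hfinite : 𝒞.Finite := by
    by_contra hinf
    rw [Set.Infinite.encard_eq hinf, ENat.toENNReal_top,
      ENNReal.top_mul (measure_ball_pos μ 0 hρ).ne', top_le_iff] at hpack
    exact hfin hpack
  refine ⟨hfinite, ?_⟩
  have := ENNReal.toReal_mono hfin hpack
  rwa [← hfinite.cast_ncard_eq, ENNReal.toReal_mul, ENat.toENNReal_coe,
    ENNReal.toReal_natCast] at this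

end BallPacking

theorem card_bounded_components_le_general {γ : ℝ → EuclideanSpace ℝ (Fin 2)} {a b : ℝ}
    (hγ : ContinuousOn γ (Icc a b)) {ℓ : ℝ} (hlen : eVariationOn γ (Icc a b) ≤ .ofReal ℓ)
    {ρ : ℝ} (hρ : 0 < ρ)
    (hball : ∀ C ∈ boundedComponents (γ '' Icc a b), ∃ c, ball c ρ ⊆ C) :
    (boundedComponents (γ '' Icc a b)).Finite ∧
      ((boundedComponents (γ '' Icc a b)).ncard : ℝ) ≤ (ℓ / (2 * π * ρ)) ^ 2 := by
  have hK := isCompact_Icc.image_of_continuousOn hγ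
  have hbv : BoundedVariationOn γ (Icc a b) := ne_top_of_le_ne_top ENNReal.ofReal_ne_top hlen
  obtain ⟨hfinite, hpack⟩ := finite_and_ncard_mul_measureReal_ball_le volume
    pairwiseDisjoint_boundedComponents (fun _ => subset_filledHull_of_mem_boundedComponents)
    hball hρ (measure_ne_top_of_subset interior_subset (isCompact_filledHull hK).measure_ne_top)
  have hvar : (eVariationOn γ (Icc a b)).toReal ^ 2 ≤ ℓ ^ 2 := by
    rw [← sq_abs ℓ]
    gcongr
    exact ENNReal.toReal_le_of_le_ofReal (abs_nonneg ℓ)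
      (hlen.trans (ENNReal.ofReal_le_ofReal (le_abs_self ℓ)))
  have harea : volume.real (ball (0 : EuclideanSpace ℝ (Fin 2)) ρ) = π * ρ ^ 2 := by
    simp [measureReal_def, hρ.le, Real.pi_nonneg, mul_comm]
  refine ⟨hfinite, ?_⟩
  rw [div_pow, le_div_iff₀ (by positivity)]
  calc (boundedComponents (γ '' Icc a b)).ncard * (2 * π * ρ) ^ 2
      = 4 * π * ((boundedComponents (γ '' Icc a b)).ncard * (π * ρ ^ 2)) := by ring
    _ ≤ 4 * π * volume.real (interior (filledHull (γ '' Icc a b))) := by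
        rw [← harea]
        gcongr
    _ ≤ (eVariationOn γ (Icc a b)).toReal ^ 2 := isoperimetric_filledHull_image_Icc hγ hbv
    _ ≤ ℓ ^ 2 := hvar

/-- **Bounding the number of regions of a disk diagram** (as in the proof of
Theorem 7.1).  If `γ` is a closed plane curve of finite length `ℓ` (total variation)
such that every bounded connected component of the complement of its image contains an
open ball of radius `1`, then the collection of bounded complementary components is
finite, of cardinality at most `(ℓ/(2π))²`. -/
theorem card_bounded_components_le
    (γ : ℝ → EuclideanSpace ℝ (Fin 2))
    (hγ : ContinuousOn γ (Set.Icc 0 1)) (hloop : γ 0 = γ 1)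
    (ℓ : ℝ) (hlen : eVariationOn γ (Set.Icc 0 1) = ENNReal.ofReal ℓ)
    (K : Set (EuclideanSpace ℝ (Fin 2))) (hK : K = γ '' Set.Icc 0 1)
    (hball : ∀ p ∉ K, Bornology.IsBounded (connectedComponentIn Kᶜ p) →
      ∃ c : EuclideanSpace ℝ (Fin 2), Metric.ball c 1 ⊆ connectedComponentIn Kᶜ p) :
    {C : Set (EuclideanSpace ℝ (Fin 2)) |
        ∃ p ∉ K, C = connectedComponentIn Kᶜ p ∧ Bornology.IsBounded C}.Finite ∧
    ({C : Set (EuclideanSpace ℝ (Fin 2)) |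
        ∃ p ∉ K, C = connectedComponentIn Kᶜ p ∧ Bornology.IsBounded C}.ncard : ℝ)
      ≤ (ℓ / (2 * Real.pi)) ^ 2 := by
  subst hK
  simpa only [boundedComponents, mul_one] using card_bounded_components_le_general hγ hlen.le
    one_pos fun C ⟨p, hp, hC, hbdd⟩ => hC ▸ hball p hp (hC ▸ hbdd)

end
end

section
/- Let γ : [0,1] → ℝ² be a closed curve and let B₁, B₂, B₃, B₄ be open balls of radius 1 whose centres are pairwise at distance at least 2 (so the balls have pairwise disjoint interiors). If each Bᵢ is contained in some bounded complementary component of γ, then the length of γ is at least 8 + 2π. -/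
open scoped ENNReal

noncomputable section

/-!
For `θ` uniform in `[0, π]`, the length of the projection of a segment to direction `θ` averages
to `2 / π` times the length of the segment. Hence twice the length of a curve bounds the integral
over `θ` of the variation of its projections, and for a closed curve each of these variations is at
least twice the width of the image. So the length of a closed curve is at least the integral of its
width over all directions, which is the perimeter of its convex hull.

A ray leaving a point of a bounded complementary component meets the curve, so in every direction
the curve extends beyond each ball it encloses: its width is at least that of the set of centres
plus one ball diameter. The integral of the diameters is `2 * π`, and it remains to see that the
convex hull of the centres has perimeter at least `8`. By Radon's theorem, either the centres are
the vertices of a convex quadrilateral, with four sides of length at least `2`, or one of them lies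
in the triangle of the others. In the latter case the unit vectors `u`, `v`, `w` from that centre
to the other three have a nontrivial vanishing nonnegative combination, so `‖u + v + w‖ ≤ 1`; thus
their pairwise inner products sum to at most `-1`. A side of the triangle is at least
`2 * (1 - ⟪u, v⟫)`, and summing over the three sides again gives `8`.
-/

section

open Filter MeasureTheory Metric Set Topology
open Real (pi_pos)
open scoped Real RealInnerProductSpace

section BoundedComponent

/-- `U` lies in a bounded connected component of the complement of `K`. -/
def LiesInBoundedComponent {E : Type*} [PseudoMetricSpace E] (K U : Set E) : Prop :=
  ∃ p ∉ K, Bornology.IsBounded (connectedComponentIn Kᶜ p) ∧ U ⊆ connectedComponentIn Kᶜ p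

theorem LiesInBoundedComponent.exists_add_smul_mem {E : Type*} [NormedAddCommGroup E]
    [NormedSpace ℝ E] {K U : Set E} {x e : E} (hU : LiesInBoundedComponent K U) (hx : x ∈ U)
    (he : e ≠ 0) : ∃ t : ℝ, 0 ≤ t ∧ x + t • e ∈ K := by
  obtain ⟨p, -, hbdd, hsub⟩ := hU
  by_contra! hmiss
  set ray : Set E := (fun t : ℝ ↦ x + t • e) '' Ici 0
  have hray : ray ⊆ connectedComponentIn Kᶜ p := by
    rw [connectedComponentIn_eq (hsub hx)]
    refine (isPreconnected_Ici.image _ (by fun_prop)).subset_connectedComponentIn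
      ⟨0, self_mem_Ici, by simp⟩ ?_
    rintro _ ⟨t, ht, rfl⟩
    exact hmiss t ht
  obtain ⟨C, hC⟩ := (hbdd.subset hray).exists_norm_le
  have he' : 0 < ‖e‖ := norm_pos_iff.2 he
  have hC0 : 0 ≤ C := (norm_nonneg _).trans (hC x ⟨0, self_mem_Ici, by simp⟩)
  set t : ℝ := (C + ‖x‖ + 1) / ‖e‖
  have ht : 0 ≤ t := by positivity
  have hnorm : ‖t • e‖ = C + ‖x‖ + 1 := by
    rw [norm_smul, Real.norm_of_nonneg ht, div_mul_cancel₀ _ he'.ne']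
  have hfar : ‖t • e‖ ≤ ‖x + t • e‖ + ‖x‖ := by
    simpa using norm_sub_le (x + t • e) x
  linarith [hC _ ⟨t, ht, rfl⟩]

variable {E : Type*} [NormedAddCommGroup E] [InnerProductSpace ℝ E] {K : Set E} {c c' e : E} {r : ℝ}

theorem exists_mem_inner_add_le (hK : IsCompact K) (hr : 0 < r)
    (hc : LiesInBoundedComponent K (ball c r)) (he : ‖e‖ = 1) :
    ∃ y ∈ K, ⟪e, c⟫ + r ≤ ⟪e, y⟫ := by
  have hray : ∀ s, 0 ≤ s → s < r → ∃ y ∈ K, ⟪e, c⟫ + s ≤ ⟪e, y⟫ := by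
    intro s hs hsr
    have hmem : c + s • e ∈ ball c r := by simpa [norm_smul, he, abs_of_nonneg hs]
    obtain ⟨t, ht, hK⟩ := hc.exists_add_smul_mem hmem (norm_pos_iff.1 (he ▸ one_pos))
    refine ⟨_, hK, ?_⟩
    simp only [inner_add_right, inner_smul_right, real_inner_self_eq_norm_sq, he]
    linarith
  obtain ⟨y₀, hy₀, -⟩ := hray 0 le_rfl hr
  obtain ⟨y, hy, hmax⟩ := hK.exists_isMaxOn ⟨y₀, hy₀⟩
    (f := fun y ↦ ⟪e, y⟫) (by fun_prop)
  refine ⟨y, hy, ?_⟩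
  have hle : r ≤ ⟪e, y⟫ - ⟪e, c⟫ := by
    refine le_of_forall_lt_imp_le_of_dense fun s hs ↦ ?_
    obtain ⟨z, hz, hsz⟩ := hray (max s 0) (le_max_right s 0) (max_lt hs hr)
    linarith [le_max_left s 0, show ⟪e, z⟫ ≤ ⟪e, y⟫ from hmax hz]
  linarith

theorem edist_inner_add_le_ediam_inner_image (hK : IsCompact K) (hr : 0 < r)
    (hc : LiesInBoundedComponent K (ball c r)) (hc' : LiesInBoundedComponent K (ball c' r))
    (he : ‖e‖ = 1) :
    edist ⟪e, c⟫ ⟪e, c'⟫ + ENNReal.ofReal (2 * r) ≤ ediam (inner ℝ e '' K) := by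
  wlog hcc' : ⟪e, c'⟫ ≤ ⟪e, c⟫ generalizing c c'
  · rw [edist_comm]
    exact this hc' hc (le_of_not_ge hcc')
  obtain ⟨y, hy, hcy⟩ := exists_mem_inner_add_le hK hr hc he
  obtain ⟨z, hz, hcz⟩ := exists_mem_inner_add_le hK hr hc' (e := -e) (by rwa [norm_neg])
  simp only [inner_neg_left] at hcz
  calc edist ⟪e, c⟫ ⟪e, c'⟫ + ENNReal.ofReal (2 * r)
      = ENNReal.ofReal (⟪e, c⟫ - ⟪e, c'⟫ + 2 * r) := by
        rw [edist_dist, Real.dist_eq, abs_of_nonneg (sub_nonneg.2 hcc'),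
          ENNReal.ofReal_add (sub_nonneg.2 hcc') (by positivity)]
    _ ≤ edist ⟪e, y⟫ ⟪e, z⟫ := by
        rw [edist_dist, Real.dist_eq]
        refine ENNReal.ofReal_le_ofReal (le_trans ?_ (le_abs_self _))
        linarith
    _ ≤ ediam (inner ℝ e '' K) :=
        edist_le_ediam_of_mem (mem_image_of_mem _ hy) (mem_image_of_mem _ hz)

theorem ediam_inner_image_add_le {C : Set E} (hK : IsCompact K) (hr : 0 < r) (hne : C.Nonempty)
    (hC : ∀ c ∈ C, LiesInBoundedComponent K (ball c r)) (he : ‖e‖ = 1) :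
    ediam (inner ℝ e '' C) + ENNReal.ofReal (2 * r) ≤ ediam (inner ℝ e '' K) := by
  have hpair : ∀ c ∈ C, ∀ c' ∈ C,
      edist ⟪e, c⟫ ⟪e, c'⟫ + ENNReal.ofReal (2 * r) ≤ ediam (inner ℝ e '' K) :=
    fun c hc c' hc' ↦ edist_inner_add_le_ediam_inner_image hK hr (hC c hc) (hC c' hc') he
  obtain ⟨c, hc⟩ := hne
  refine add_le_of_le_tsub_right_of_le (le_add_self.trans (hpair c hc c hc)) ?_
  exact ediam_image_le_iff.2 fun c hc c' hc' ↦
    ENNReal.le_sub_of_add_le_right ENNReal.ofReal_ne_top (hpair c hc c' hc')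

end BoundedComponent

section Variation

theorem two_mul_edist_le_eVariationOn {α E : Type*} [LinearOrder α] [PseudoEMetricSpace E]
    {f : α → E} {a b s t : α} (hf : f a = f b) (hs : s ∈ Icc a b) (ht : t ∈ Icc a b) :
    2 * edist (f s) (f t) ≤ eVariationOn f (Icc a b) := by
  wlog hst : s ≤ t generalizing s t
  · rw [edist_comm]
    exact this ht hs (le_of_not_ge hst)
  have hsplit {x y z : α} (hxy : x ≤ y) (hyz : y ≤ z) :
      eVariationOn f (Icc x y) + eVariationOn f (Icc y z) = eVariationOn f (Icc x z) := by
    simpa using eVariationOn.Icc_add_Icc f hxy hyz (mem_univ y)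
  have hedge {x y : α} (hxy : x ≤ y) : edist (f x) (f y) ≤ eVariationOn f (Icc x y) :=
    eVariationOn.edist_le f (left_mem_Icc.2 hxy) (right_mem_Icc.2 hxy)
  calc 2 * edist (f s) (f t)
      ≤ (edist (f a) (f s) + edist (f t) (f b)) + edist (f s) (f t) := by
        rw [two_mul, ← hf, add_comm (edist (f a) (f s)), edist_comm (f s)]
        gcongr
        exact edist_triangle _ _ _
    _ ≤ (eVariationOn f (Icc a s) + eVariationOn f (Icc t b)) + eVariationOn f (Icc s t) := by
        gcongr
        exacts [hedge hs.1, hedge ht.2, hedge hst]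
    _ = eVariationOn f (Icc a b) := by
        rw [← hsplit hs.1 hs.2, ← hsplit hst ht.2]
        ring

theorem two_mul_ediam_image_le_eVariationOn {α E : Type*} [LinearOrder α] [PseudoEMetricSpace E]
    {f : α → E} {a b : α} (hf : f a = f b) :
    2 * ediam (f '' Icc a b) ≤ eVariationOn f (Icc a b) := by
  rw [mul_comm, ← ENNReal.le_div_iff_mul_le (.inl two_ne_zero) (.inl ENNReal.ofNat_ne_top),
    ediam_image_le_iff]
  intro s hs t ht
  rw [ENNReal.le_div_iff_mul_le (.inl two_ne_zero) (.inl ENNReal.ofNat_ne_top), mul_comm]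
  exact two_mul_edist_le_eVariationOn hf hs ht

/-- The grid `0, 1 / n, …, 1` of the unit interval (only `{0}` for `n = 0`). -/
def unitGrid (n : ℕ) : Set ℝ := (fun k : ℕ ↦ (k / n : ℝ)) '' Iic n

theorem unitGrid_subset_Icc (n : ℕ) : unitGrid n ⊆ Icc 0 1 := by
  rintro _ ⟨k, hk, rfl⟩
  exact ⟨by positivity, div_le_one_of_le₀ (by exact_mod_cast hk) (by positivity)⟩

variable {E : Type*} [PseudoEMetricSpace E]

theorem eVariationOn_unitGrid (f : ℝ → E) (n : ℕ) :
    eVariationOn f (unitGrid n) =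
      ∑ k ∈ Finset.range n, edist (f (k / n)) (f ((k + 1 : ℕ) / n)) :=
  eVariationOn.image_range_of_monotone f (fun _ _ h ↦ by gcongr) n

theorem eVariationOn_Icc_le_liminf_unitGrid {f : ℝ → E} (hf : ContinuousOn f (Icc 0 1)) :
    eVariationOn f (Icc 0 1) ≤ liminf (fun n ↦ eVariationOn f (unitGrid n)) atTop := by
  set φ : ℕ → ℝ → ℝ := fun n t ↦ ⌊t * n⌋₊ / n
  have hφ_maps (n : ℕ) : MapsTo (φ n) (Icc 0 1) (unitGrid n) := fun t ht ↦
    ⟨⌊t * n⌋₊, Nat.floor_le_of_le (mul_le_of_le_one_left (Nat.cast_nonneg n) ht.2), rfl⟩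
  have hφ_mono (n : ℕ) : Monotone (φ n) := fun s t hst ↦ by
    simp only [φ]
    gcongr
  have hφ_lim {t : ℝ} (ht : t ∈ Icc (0 : ℝ) 1) : Tendsto (fun n ↦ f (φ n t)) atTop (𝓝 (f t)) := by
    refine (hf t ht).tendsto.comp (tendsto_nhdsWithin_iff.2 ⟨?_, ?_⟩)
    · exact (tendsto_nat_floor_mul_div_atTop ht.1).comp tendsto_natCast_atTop_atTop
    · exact .of_forall fun n ↦ unitGrid_subset_Icc n (hφ_maps n ht)
  refine le_of_forall_lt_imp_le_of_dense fun v hv ↦ le_liminf_of_le (by isBoundedDefault) ?_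
  filter_upwards [eVariationOn.lowerSemicontinuous_aux (fun t ht ↦ hφ_lim ht) hv] with n hn
  exact hn.le.trans <|
    eVariationOn.comp_le_of_monotoneOn f (φ n) ((hφ_mono n).monotoneOn _) (hφ_maps n)

end Variation

section Crofton

/-- The Euclidean plane. -/
abbrev Plane : Type := EuclideanSpace ℝ (Fin 2)

/-- The unit vector of the plane at angle `θ` to the first axis. -/
def direction (θ : ℝ) : Plane := !₂[Real.cos θ, Real.sin θ]

theorem inner_direction_direction (θ φ : ℝ) : ⟪direction θ, direction φ⟫ = Real.cos (θ - φ) := by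
  simp [direction, PiLp.inner_apply, Real.cos_sub, mul_comm]

theorem norm_direction (θ : ℝ) : ‖direction θ‖ = 1 := by
  rw [norm_eq_sqrt_real_inner, inner_direction_direction, sub_self, Real.cos_zero, Real.sqrt_one]

theorem continuous_direction : Continuous direction := by
  unfold direction
  fun_prop

theorem exists_eq_norm_smul_direction (v : Plane) : ∃ φ, v = ‖v‖ • direction φ := by
  set z : ℂ := ⟨v 0, v 1⟩
  have hz : ‖z‖ = ‖v‖ := by
    rw [EuclideanSpace.norm_eq, Complex.norm_eq_sqrt_sq_add_sq]
    simp [z]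
  refine ⟨z.arg, ?_⟩
  ext i
  fin_cases i
  · simpa [direction, hz] using (Complex.norm_mul_cos_arg z).symm
  · simpa [direction, hz] using (Complex.norm_mul_sin_arg z).symm

theorem lintegral_enorm_cos_sub (φ : ℝ) : ∫⁻ θ in Ioc 0 π, ‖Real.cos (θ - φ)‖ₑ = 2 := by
  have hperiodic : Function.Periodic (fun x ↦ |Real.cos x|) π := fun x ↦ by
    simp [Real.cos_add_pi]
  have hreal : ∫ θ in 0..π, |Real.cos (θ - φ)| = 2 :=
    calc ∫ θ in 0..π, |Real.cos (θ - φ)|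
        = ∫ x in -φ..-φ + π, |Real.cos x| := by
          rw [intervalIntegral.integral_comp_sub_right (fun x ↦ |Real.cos x|), zero_sub,
            sub_eq_neg_add]
      _ = ∫ x in -(π / 2)..-(π / 2) + π, |Real.cos x| := hperiodic.intervalIntegral_add_eq _ _
      _ = ∫ x in -(π / 2)..π / 2, Real.cos x := by
          rw [show -(π / 2) + π = π / 2 by ring]
          refine intervalIntegral.integral_congr fun x hx ↦ abs_of_nonneg ?_
          rw [uIcc_of_le (by linarith [pi_pos])] at hx
          exact Real.cos_nonneg_of_mem_Icc hx
      _ = 2 := by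
          rw [integral_cos, Real.sin_neg, Real.sin_pi_div_two]
          norm_num
  have hint : IntervalIntegrable (fun θ ↦ |Real.cos (θ - φ)|) volume 0 π :=
    Continuous.intervalIntegrable (by fun_prop) _ _
  simp only [Real.enorm_eq_ofReal_abs]
  rw [← ofReal_integral_eq_lintegral_ofReal hint.1 (.of_forall fun _ ↦ abs_nonneg _),
    ← intervalIntegral.integral_of_le pi_pos.le, hreal, ENNReal.ofReal_ofNat]

theorem lintegral_edist_inner_direction (v w : Plane) :
    ∫⁻ θ in Ioc 0 π, edist ⟪direction θ, v⟫ ⟪direction θ, w⟫ = 2 * edist v w := by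
  obtain ⟨φ, hφ⟩ := exists_eq_norm_smul_direction (v - w)
  have hcos (θ : ℝ) :
      edist ⟪direction θ, v⟫ ⟪direction θ, w⟫ = ‖v - w‖ₑ * ‖Real.cos (θ - φ)‖ₑ := by
    rw [edist_eq_enorm_sub, ← inner_sub_right, hφ, inner_smul_right, inner_direction_direction,
      enorm_mul, ← hφ, enorm_norm]
  simp only [hcos]
  rw [lintegral_const_mul _ (by fun_prop), lintegral_enorm_cos_sub, edist_eq_enorm_sub, mul_comm]

theorem measurable_edist_inner_direction (v w : Plane) :
    Measurable fun θ ↦ edist ⟪direction θ, v⟫ ⟪direction θ, w⟫ := by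
  have := continuous_direction.measurable
  fun_prop

theorem lintegral_sum_edist_inner_direction {ι : Type*} (s : Finset ι) (v w : ι → Plane) :
    ∫⁻ θ in Ioc 0 π, ∑ i ∈ s, edist ⟪direction θ, v i⟫ ⟪direction θ, w i⟫ =
      2 * ∑ i ∈ s, edist (v i) (w i) := by
  rw [lintegral_finsetSum s fun i _ ↦ measurable_edist_inner_direction (v i) (w i), Finset.mul_sum]
  simp only [lintegral_edist_inner_direction]

theorem lintegral_eVariationOn_inner_direction_le {γ : ℝ → Plane}
    (hγ : ContinuousOn γ (Icc 0 1)) :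
    ∫⁻ θ in Ioc 0 π, eVariationOn (fun t ↦ ⟪direction θ, γ t⟫) (Icc 0 1) ≤
      2 * eVariationOn γ (Icc 0 1) :=
  calc ∫⁻ θ in Ioc 0 π, eVariationOn (fun t ↦ ⟪direction θ, γ t⟫) (Icc 0 1)
      ≤ ∫⁻ θ in Ioc 0 π, liminf (fun n ↦
          eVariationOn (fun t ↦ ⟪direction θ, γ t⟫) (unitGrid n)) atTop :=
        lintegral_mono fun θ ↦ eVariationOn_Icc_le_liminf_unitGrid (by fun_prop)
    _ ≤ liminf (fun n ↦ ∫⁻ θ in Ioc 0 π,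
          eVariationOn (fun t ↦ ⟪direction θ, γ t⟫) (unitGrid n)) atTop := by
        refine lintegral_liminf_le fun n ↦ ?_
        simp only [eVariationOn_unitGrid]
        exact Finset.measurable_fun_sum _ fun k _ ↦ measurable_edist_inner_direction _ _
    _ = liminf (fun n ↦ 2 * eVariationOn γ (unitGrid n)) atTop := by
        simp only [eVariationOn_unitGrid, lintegral_sum_edist_inner_direction]
    _ ≤ liminf (fun _ : ℕ ↦ 2 * eVariationOn γ (Icc 0 1)) atTop :=
        liminf_le_liminf <| .of_forall fun n ↦ by
          gcongr
          exact eVariationOn.mono γ (unitGrid_subset_Icc n)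
    _ = 2 * eVariationOn γ (Icc 0 1) := liminf_const _

end Crofton

section HullPerimeter

/-- The perimeter of the convex hull of a plane set, as the integral of its width over all
directions (Cauchy's formula). -/
def hullPerimeter (S : Set Plane) : ℝ≥0∞ :=
  ∫⁻ θ in Ioc 0 π, ediam (inner ℝ (direction θ) '' S)

theorem hullPerimeter_mono {S T : Set Plane} (h : S ⊆ T) : hullPerimeter S ≤ hullPerimeter T :=
  lintegral_mono fun _ ↦ ediam_mono (image_mono h)

theorem hullPerimeter_image_Icc_le_eVariationOn {γ : ℝ → Plane} (hγ : ContinuousOn γ (Icc 0 1))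
    (hloop : γ 0 = γ 1) : hullPerimeter (γ '' Icc 0 1) ≤ eVariationOn γ (Icc 0 1) := by
  rw [← ENNReal.mul_le_mul_iff_right two_ne_zero ENNReal.ofNat_ne_top]
  calc 2 * hullPerimeter (γ '' Icc 0 1)
      = ∫⁻ θ in Ioc 0 π, 2 * ediam ((fun t ↦ ⟪direction θ, γ t⟫) '' Icc 0 1) := by
        simp only [hullPerimeter, image_image]
        rw [lintegral_const_mul' _ _ ENNReal.ofNat_ne_top]
    _ ≤ ∫⁻ θ in Ioc 0 π, eVariationOn (fun t ↦ ⟪direction θ, γ t⟫) (Icc 0 1) :=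
        lintegral_mono fun θ ↦ two_mul_ediam_image_le_eVariationOn (by rw [hloop])
    _ ≤ 2 * eVariationOn γ (Icc 0 1) := lintegral_eVariationOn_inner_direction_le hγ

theorem hullPerimeter_add_le {C K : Set Plane} {r : ℝ} (hK : IsCompact K) (hr : 0 < r)
    (hne : C.Nonempty) (hC : ∀ c ∈ C, LiesInBoundedComponent K (ball c r)) :
    hullPerimeter C + ENNReal.ofReal (2 * π * r) ≤ hullPerimeter K :=
  calc hullPerimeter C + ENNReal.ofReal (2 * π * r)
      = ∫⁻ θ in Ioc 0 π, (ediam (inner ℝ (direction θ) '' C) + ENNReal.ofReal (2 * r)) := by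
        rw [lintegral_add_right _ measurable_const, setLIntegral_const, Real.volume_Ioc, sub_zero,
          ← ENNReal.ofReal_mul (by positivity), hullPerimeter, mul_right_comm]
    _ ≤ hullPerimeter K :=
        lintegral_mono fun θ ↦ ediam_inner_image_add_le hK hr hne hC (norm_direction θ)

theorem sum_dist_cycle_eq_of_mem_uIcc {a b c d o : ℝ} (hac : o ∈ uIcc a c) (hbd : o ∈ uIcc b d) :
    dist a b + dist b c + dist c d + dist d a =
      2 * dist (max (max a c) (max b d)) (min (min a c) (min b d)) := by
  simp only [Real.dist_eq, mem_uIcc] at *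
  grind

theorem sum_edist_cycle_le_of_mem_uIcc {a b c d o : ℝ} (hac : o ∈ uIcc a c) (hbd : o ∈ uIcc b d) :
    edist a b + edist b c + edist c d + edist d a ≤ 2 * ediam {a, b, c, d} := by
  have hmax : max (max a c) (max b d) ∈ ({a, b, c, d} : Set ℝ) := by grind
  have hmin : min (min a c) (min b d) ∈ ({a, b, c, d} : Set ℝ) := by grind
  calc edist a b + edist b c + edist c d + edist d a
      = 2 * edist (max (max a c) (max b d)) (min (min a c) (min b d)) := by
        simp only [edist_dist]
        rw [← ENNReal.ofReal_add, ← ENNReal.ofReal_add, ← ENNReal.ofReal_add,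
          sum_dist_cycle_eq_of_mem_uIcc hac hbd, ENNReal.ofReal_mul, ENNReal.ofReal_ofNat]
        all_goals positivity
    _ ≤ 2 * ediam {a, b, c, d} := by
        gcongr
        exact edist_le_ediam_of_mem hmax hmin

theorem inner_mem_uIcc_of_mem_segment {E : Type*} [NormedAddCommGroup E] [InnerProductSpace ℝ E]
    (e : E) {x y z : E} (h : z ∈ segment ℝ x y) : ⟪e, z⟫ ∈ uIcc ⟪e, x⟫ ⟪e, y⟫ := by
  rw [← segment_eq_uIcc]
  exact image_segment ℝ (innerₛₗ ℝ e).toAffineMap x y ▸ mem_image_of_mem _ h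

theorem quadrilateral_perimeter_le_hullPerimeter {a b c d : Plane}
    (h : (segment ℝ a c ∩ segment ℝ b d).Nonempty) :
    edist a b + edist b c + edist c d + edist d a ≤ hullPerimeter {a, b, c, d} := by
  obtain ⟨o, hac, hbd⟩ := h
  set v : Fin 4 → Plane := ![a, b, c, d]
  set w : Fin 4 → Plane := ![b, c, d, a]
  have hsum : ∑ i, edist (v i) (w i) = edist a b + edist b c + edist c d + edist d a := by
    simp [Fin.sum_univ_four, v, w]
  rw [← ENNReal.mul_le_mul_iff_right two_ne_zero ENNReal.ofNat_ne_top, ← hsum,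
    ← lintegral_sum_edist_inner_direction, hullPerimeter,
    ← lintegral_const_mul' _ _ ENNReal.ofNat_ne_top]
  refine lintegral_mono fun θ ↦ ?_
  simpa [Fin.sum_univ_four, v, w, image_insert_eq] using sum_edist_cycle_le_of_mem_uIcc
    (inner_mem_uIcc_of_mem_segment (direction θ) hac)
    (inner_mem_uIcc_of_mem_segment (direction θ) hbd)

theorem triangle_perimeter_le_hullPerimeter (a b c : Plane) :
    edist a b + edist b c + edist c a ≤ hullPerimeter {a, b, c} := by
  have h := quadrilateral_perimeter_le_hullPerimeter
    (a := a) (b := b) (c := c) (d := a) ⟨a, left_mem_segment ℝ a c, right_mem_segment ℝ b a⟩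
  rwa [edist_self, add_zero, show ({a, b, c, a} : Set Plane) = {a, b, c} by grind] at h

end HullPerimeter

section FourPoints

theorem exists_perm_eq_triple_or_eq_singleton_or_eq_pair (I : Finset (Fin 4)) (hI : I.Nonempty)
    (hI' : Iᶜ.Nonempty) : ∃ σ : Equiv.Perm (Fin 4), I = {σ 0, σ 1, σ 2} ∧ Iᶜ = {σ 3} ∨
      I = {σ 3} ∧ Iᶜ = {σ 0, σ 1, σ 2} ∨ I = {σ 0, σ 2} ∧ Iᶜ = {σ 1, σ 3} := by
  revert I
  decide

theorem exists_perm_mem_convexHull_or_segment_inter_segment_nonempty {𝕜 E : Type*} [Field 𝕜]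
    [LinearOrder 𝕜] [IsStrictOrderedRing 𝕜] [AddCommGroup E] [Module 𝕜 E] {f : Fin 4 → E}
    (hf : ¬ AffineIndependent 𝕜 f) :
    ∃ σ : Equiv.Perm (Fin 4), f (σ 3) ∈ convexHull 𝕜 {f (σ 0), f (σ 1), f (σ 2)} ∨
      (segment 𝕜 (f (σ 0)) (f (σ 2)) ∩ segment 𝕜 (f (σ 1)) (f (σ 3))).Nonempty := by
  obtain ⟨J, hJ⟩ := Convex.radon_partition hf
  lift J to Finset (Fin 4) using J.toFinite with I
  rw [← Finset.coe_compl] at hJ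
  have hI : I.Nonempty := by simpa using hJ.left
  have hI' : Iᶜ.Nonempty := by simpa [-Finset.coe_compl] using hJ.right
  obtain ⟨σ, ⟨hσ, hσ'⟩ | ⟨hσ, hσ'⟩ | ⟨hσ, hσ'⟩⟩ :=
    exists_perm_eq_triple_or_eq_singleton_or_eq_pair I hI hI'
  all_goals rw [hσ', hσ] at hJ
  · exact ⟨σ, .inl (by simpa [image_insert_eq, inter_singleton_nonempty] using hJ)⟩
  · exact ⟨σ, .inl (by simpa [image_insert_eq, singleton_inter_nonempty] using hJ)⟩
  · exact ⟨σ, .inr (by simpa [image_insert_eq, convexHull_pair] using hJ)⟩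

theorem norm_add_add_le_one_of_smul_add_eq_zero {E : Type*} [NormedAddCommGroup E]
    [NormedSpace ℝ E] {u v w : E} {p q r : ℝ} (hu : ‖u‖ = 1) (hv : ‖v‖ = 1) (hw : ‖w‖ = 1)
    (hp : 0 ≤ p) (hq : 0 ≤ q) (hr : 0 ≤ r) (hpos : 0 < p + q + r)
    (h : p • u + q • v + r • w = 0) : ‖u + v + w‖ ≤ 1 := by
  have hcoeff {x y z : E} {α β δ : ℝ} (hx : ‖x‖ = 1) (hy : ‖y‖ = 1) (hz : ‖z‖ = 1)
      (hα : 0 ≤ α) (hβ : 0 ≤ β) (hδ : 0 ≤ δ) (h : α • x + β • y + δ • z = 0) : α ≤ β + δ :=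
    calc α = ‖β • y + δ • z‖ := by
          rw [← norm_neg, ← eq_neg_of_add_eq_zero_left (add_assoc (α • x) _ _ ▸ h), norm_smul, hx,
            mul_one, Real.norm_of_nonneg hα]
      _ ≤ ‖β • y‖ + ‖δ • z‖ := norm_add_le _ _
      _ = β + δ := by
          rw [norm_smul, norm_smul, hy, hz, Real.norm_of_nonneg hβ, Real.norm_of_nonneg hδ,
            mul_one, mul_one]
  have hp' : 0 ≤ q + r - p := sub_nonneg.2 (hcoeff hu hv hw hp hq hr h)
  have hq' : 0 ≤ r + p - q := sub_nonneg.2 (hcoeff hv hw hu hq hr hp (by rw [← h]; abel))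
  have hr' : 0 ≤ p + q - r := sub_nonneg.2 (hcoeff hw hu hv hr hp hq (by rw [← h]; abel))
  have hcomb : (p + q + r) • (u + v + w) =
      (q + r - p) • u + (r + p - q) • v + (p + q - r) • w :=
    calc (p + q + r) • (u + v + w)
        = (q + r - p) • u + (r + p - q) • v + (p + q - r) • w +
            (2 : ℝ) • (p • u + q • v + r • w) := by module
      _ = _ := by rw [h, smul_zero, add_zero]
  refine le_of_mul_le_mul_left ?_ hpos
  calc (p + q + r) * ‖u + v + w‖
      = ‖(q + r - p) • u + (r + p - q) • v + (p + q - r) • w‖ := by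
        rw [← hcomb, norm_smul, Real.norm_of_nonneg hpos.le]
    _ ≤ ‖(q + r - p) • u‖ + ‖(r + p - q) • v‖ + ‖(p + q - r) • w‖ := norm_add₃_le
    _ = (p + q + r) * 1 := by
        rw [norm_smul, norm_smul, norm_smul, hu, hv, hw, Real.norm_of_nonneg hp',
          Real.norm_of_nonneg hq', Real.norm_of_nonneg hr']
        ring

variable {E : Type*} [NormedAddCommGroup E] [InnerProductSpace ℝ E]

theorem inner_add_inner_add_inner_le_neg_one {u v w : E} {p q r : ℝ} (hu : ‖u‖ = 1)
    (hv : ‖v‖ = 1) (hw : ‖w‖ = 1) (hp : 0 ≤ p) (hq : 0 ≤ q) (hr : 0 ≤ r) (hpos : 0 < p + q + r)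
    (h : p • u + q • v + r • w = 0) : ⟪u, v⟫ + ⟪v, w⟫ + ⟪w, u⟫ ≤ -1 := by
  have hnorm : ‖u + v + w‖ ^ 2 = 3 + 2 * (⟪u, v⟫ + ⟪v, w⟫ + ⟪w, u⟫) := by
    rw [norm_add_sq_real, norm_add_sq_real, inner_add_left, hu, hv, hw, real_inner_comm u w]
    ring
  have hle : ‖u + v + w‖ ^ 2 ≤ 1 := pow_le_one₀ (norm_nonneg _)
    (norm_add_add_le_one_of_smul_add_eq_zero hu hv hw hp hq hr hpos h)
  linarith

theorem mul_one_sub_inner_le_norm_smul_sub_smul {u v : E} {r s t : ℝ} (hu : ‖u‖ = 1)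
    (hv : ‖v‖ = 1) (hs : r ≤ s) (ht : r ≤ t) : r * (1 - ⟪u, v⟫) ≤ ‖s • u - t • v‖ := by
  have hcos : 0 ≤ 1 - ⟪u, v⟫ := sub_nonneg.2 (by simpa [hu, hv] using real_inner_le_norm u v)
  have hexpand : ⟪s • u - t • v, u - v⟫ = (s + t) * (1 - ⟪u, v⟫) := by
    simp only [inner_sub_left, inner_sub_right, real_inner_smul_left, real_inner_self_eq_norm_sq,
      hu, hv, real_inner_comm u v]
    ring
  have huv : ‖u - v‖ ≤ 2 := (norm_sub_le u v).trans_eq (by rw [hu, hv]; norm_num)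
  have hbound : (s + t) * (1 - ⟪u, v⟫) ≤ ‖s • u - t • v‖ * 2 :=
    calc (s + t) * (1 - ⟪u, v⟫) ≤ ‖s • u - t • v‖ * ‖u - v‖ := hexpand ▸ real_inner_le_norm _ _
      _ ≤ ‖s • u - t • v‖ * 2 := by gcongr
  have hsum : (r + r) * (1 - ⟪u, v⟫) ≤ (s + t) * (1 - ⟪u, v⟫) := by gcongr
  linarith

theorem exists_smul_add_smul_add_smul_eq_zero_of_mem_convexHull {E : Type*} [AddCommGroup E]
    [Module ℝ E] {a b c o : E} (ho : o ∈ convexHull ℝ {a, b, c}) :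
    ∃ p q r : ℝ, 0 ≤ p ∧ 0 ≤ q ∧ 0 ≤ r ∧ p + q + r = 1 ∧
      p • (a - o) + q • (b - o) + r • (c - o) = 0 := by
  rw [← convexJoin_singleton_segment, mem_convexJoin] at ho
  obtain ⟨_, rfl, y, ⟨s, t, hs, ht, hst, rfl⟩, ⟨p, q, hp, hq, hpq, rfl⟩⟩ := ho
  refine ⟨p, q * s, q * t, hp, by positivity, by positivity, ?_, ?_⟩
  · linear_combination hpq + q * hst
  · match_scalars <;> grind

theorem four_mul_le_triangle_perimeter {a b c o : E} {r : ℝ} (hr : 0 < r)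
    (ho : o ∈ convexHull ℝ {a, b, c}) (ha : r ≤ dist a o) (hb : r ≤ dist b o)
    (hc : r ≤ dist c o) : 4 * r ≤ dist a b + dist b c + dist c a := by
  obtain ⟨p, q, s, hp, hq, hs, hpqs, hbary⟩ :=
    exists_smul_add_smul_add_smul_eq_zero_of_mem_convexHull ho
  have hpolar (x : E) (hx : r ≤ dist x o) :
      ∃ u : E, ‖u‖ = 1 ∧ dist x o • u = x - o := by
    rw [dist_eq_norm] at hx ⊢
    exact ⟨_, NormedSpace.norm_normalize (norm_pos_iff.1 (hr.trans_le hx)),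
      NormedSpace.norm_smul_normalize _⟩
  obtain ⟨u, hu, hau⟩ := hpolar a ha
  obtain ⟨v, hv, hbv⟩ := hpolar b hb
  obtain ⟨w, hw, hcw⟩ := hpolar c hc
  have hcos : ⟪u, v⟫ + ⟪v, w⟫ + ⟪w, u⟫ ≤ -1 := by
    refine inner_add_inner_add_inner_le_neg_one hu hv hw (p := p * dist a o) (q := q * dist b o)
      (r := s * dist c o) (by positivity) (by positivity) (by positivity) ?_ ?_
    · calc 0 < (p + q + s) * r := by rw [hpqs, one_mul]; exact hr
        _ = p * r + q * r + s * r := by ring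
        _ ≤ p * dist a o + q * dist b o + s * dist c o := by gcongr
    · simpa only [mul_smul, hau, hbv, hcw] using hbary
  have hab : r * (1 - ⟪u, v⟫) ≤ dist a b := by
    simpa only [hau, hbv, sub_sub_sub_cancel_right, ← dist_eq_norm] using
      mul_one_sub_inner_le_norm_smul_sub_smul hu hv ha hb
  have hbc : r * (1 - ⟪v, w⟫) ≤ dist b c := by
    simpa only [hbv, hcw, sub_sub_sub_cancel_right, ← dist_eq_norm] using
      mul_one_sub_inner_le_norm_smul_sub_smul hv hw hb hc
  have hca : r * (1 - ⟪w, u⟫) ≤ dist c a := by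
    simpa only [hcw, hau, sub_sub_sub_cancel_right, ← dist_eq_norm] using
      mul_one_sub_inner_le_norm_smul_sub_smul hw hu hc ha
  linarith [mul_le_mul_of_nonneg_left hcos hr.le]

theorem four_mul_le_hullPerimeter_range {c : Fin 4 → Plane} {r : ℝ} (hr : 0 < r)
    (hsep : Pairwise fun i j ↦ r ≤ dist (c i) (c j)) :
    ENNReal.ofReal (4 * r) ≤ hullPerimeter (range c) := by
  have hdep : ¬ AffineIndependent ℝ c := fun h ↦ by
    simpa using h.card_le_finrank_succ.trans (Nat.succ_le_succ (Submodule.finrank_le _))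
  obtain ⟨σ, hσ⟩ := exists_perm_mem_convexHull_or_segment_inter_segment_nonempty hdep
  have hdist {i j : Fin 4} (hij : i ≠ j) : r ≤ dist (c (σ i)) (c (σ j)) :=
    hsep (σ.injective.ne hij)
  rcases hσ with hhull | hcross
  · calc ENNReal.ofReal (4 * r)
        ≤ ENNReal.ofReal (dist (c (σ 0)) (c (σ 1)) + dist (c (σ 1)) (c (σ 2)) +
            dist (c (σ 2)) (c (σ 0))) :=
          ENNReal.ofReal_le_ofReal <| four_mul_le_triangle_perimeter hr hhull
            (hdist (by decide)) (hdist (by decide)) (hdist (by decide))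
      _ = edist (c (σ 0)) (c (σ 1)) + edist (c (σ 1)) (c (σ 2)) + edist (c (σ 2)) (c (σ 0)) := by
          simp only [edist_dist]
          rw [ENNReal.ofReal_add, ENNReal.ofReal_add]
          all_goals positivity
      _ ≤ hullPerimeter {c (σ 0), c (σ 1), c (σ 2)} := triangle_perimeter_le_hullPerimeter _ _ _
      _ ≤ hullPerimeter (range c) := hullPerimeter_mono (by simp [insert_subset_iff])
  · have hedge {i j : Fin 4} (hij : i ≠ j) :
        ENNReal.ofReal r ≤ edist (c (σ i)) (c (σ j)) :=
      edist_dist (c (σ i)) _ ▸ ENNReal.ofReal_le_ofReal (hdist hij)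
    calc ENNReal.ofReal (4 * r)
        = ENNReal.ofReal r + ENNReal.ofReal r + ENNReal.ofReal r + ENNReal.ofReal r := by
          rw [ENNReal.ofReal_mul (by norm_num), ENNReal.ofReal_ofNat]
          ring
      _ ≤ edist (c (σ 0)) (c (σ 1)) + edist (c (σ 1)) (c (σ 2)) + edist (c (σ 2)) (c (σ 3)) +
            edist (c (σ 3)) (c (σ 0)) := by
          gcongr <;> exact hedge (by decide)
      _ ≤ hullPerimeter {c (σ 0), c (σ 1), c (σ 2), c (σ 3)} :=
          quadrilateral_perimeter_le_hullPerimeter hcross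
      _ ≤ hullPerimeter (range c) := hullPerimeter_mono (by simp [insert_subset_iff])

end FourPoints

theorem length_ge_of_four_unit_balls_general {γ : ℝ → Plane} {c : Fin 4 → Plane} {d r : ℝ}
    (hγ : ContinuousOn γ (Icc 0 1)) (hloop : γ 0 = γ 1) (hd : 0 < d) (hr : 0 < r)
    (hdist : Pairwise fun i j ↦ d ≤ dist (c i) (c j))
    (hball : ∀ i, LiesInBoundedComponent (γ '' Icc 0 1) (ball (c i) r)) :
    ENNReal.ofReal (4 * d + 2 * π * r) ≤ eVariationOn γ (Icc 0 1) := by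
  have hcompact : IsCompact (γ '' Icc 0 1) := isCompact_Icc.image_of_continuousOn hγ
  calc ENNReal.ofReal (4 * d + 2 * π * r)
      = ENNReal.ofReal (4 * d) + ENNReal.ofReal (2 * π * r) :=
        ENNReal.ofReal_add (by positivity) (by positivity)
    _ ≤ hullPerimeter (range c) + ENNReal.ofReal (2 * π * r) := by
        gcongr
        exact four_mul_le_hullPerimeter_range hd hdist
    _ ≤ hullPerimeter (γ '' Icc 0 1) :=
        hullPerimeter_add_le hcompact hr (range_nonempty c) (forall_mem_range.2 hball)
    _ ≤ eVariationOn γ (Icc 0 1) := hullPerimeter_image_Icc_le_eVariationOn hγ hloop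

end

/-- **Four-disk lower bound** (Sections 6.4–6.6).  If a closed plane curve has four open
unit balls, with centres pairwise at distance at least `2`, each contained in some
bounded complementary component, then its length is at least `8 + 2π`. -/
theorem length_ge_of_four_unit_balls
    (γ : ℝ → EuclideanSpace ℝ (Fin 2))
    (hγ : ContinuousOn γ (Set.Icc 0 1)) (hloop : γ 0 = γ 1)
    (K : Set (EuclideanSpace ℝ (Fin 2))) (hK : K = γ '' Set.Icc 0 1)
    (c : Fin 4 → EuclideanSpace ℝ (Fin 2))
    (hdist : ∀ i j : Fin 4, i ≠ j → 2 ≤ dist (c i) (c j))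
    (hball : ∀ i : Fin 4, ∃ p ∉ K,
      Bornology.IsBounded (connectedComponentIn Kᶜ p) ∧
      Metric.ball (c i) 1 ⊆ connectedComponentIn Kᶜ p) :
    ENNReal.ofReal (8 + 2 * Real.pi) ≤ eVariationOn γ (Set.Icc 0 1) := by
  rw [show 8 + 2 * Real.pi = 4 * 2 + 2 * Real.pi * 1 by ring]
  exact length_ge_of_four_unit_balls_general hγ hloop two_pos one_pos hdist (hK ▸ hball)

end
end
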